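/- Let x > 0 be real with x not an integer. Then ∑_{n=1}^∞ σ_{1/2}(n) n^{−1/2} e^{−2π√(2nx)} sin(2π√(2nx)) = ζ(1/2)/(2π√(2x)) − ( 1/(2πx) + π√(2x) )·ζ(−1/2) + (x/(π√2)) ∑_{n=1}^∞ σ_{1/2}(n) n^{−1/2} (√x − √(2n))/(x² + n²). -/

import Mathlib

open Complex Finset
open scoped Real BigOperators Classical

/-- Generalized divisor sum `σ_r(n) = ∑_{d ∣ n} d^r` with real exponent. -/
noncomputable def rsigma (r : ℝ) (n : ℕ) : ℝ := ∑ d ∈ n.divisors, (d : ℝ) ^ r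

open Filter MeasureTheory Topology

/-!
Poisson summation applied to the Lévy density `t ^ (-3/2) * exp (-a / t)`, whose Fourier transform
is a damped exponential in `√(a ξ)`, evaluates `∑ k ^ (-3/2) * exp (-a / k)` as a series of damped
cosines. Integrating twice in `a` gives companion formulas for `∑ k ^ (-1/2) * (1 - exp (-a / k))`
and its primitive; the limit `a → 0` fixes the constants as `ζ(1/2)` and `ζ(-1/2)`.

Writing `n = j k` and summing over `k` first turns the divisor series into a sum over `j` of such
series at `a = 2 π x j`. Over `j ≤ N` the formulas replace it by geometric series in
`exp (-2 π x / k)`, which the partial fraction expansion of `coth` evaluates. The terms growing with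
`N` cancel, and `N → ∞` gives the result.
-/

section Levy

/-- The (unnormalised) Lévy density `t ^ (-3/2) * exp (-a / t)` on the positive half-line, extended
by zero. At `t = 0` the closed formula also gives `0`, since `Real.rpow` has `0 ^ (-3/2) = 0`. -/
noncomputable def levyDensity (a t : ℝ) : ℝ :=
  if 0 < t then t ^ (-(3 / 2) : ℝ) * Real.exp (-(a / t)) else 0

/-- The Laplace transform of the Lévy density, at a complex argument. -/
noncomputable def levyLaplace (a : ℝ) (b : ℂ) : ℂ :=
  ∫ t in Set.Ioi (0 : ℝ), (levyDensity a t : ℂ) * cexp (-(b * t))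

variable {a : ℝ}

lemma levyDensity_of_pos (a : ℝ) {t : ℝ} (ht : 0 < t) :
    levyDensity a t = t ^ (-(3 / 2) : ℝ) * Real.exp (-(a / t)) := if_pos ht

lemma levyDensity_of_nonpos (a : ℝ) {t : ℝ} (ht : t ≤ 0) : levyDensity a t = 0 :=
  if_neg ht.not_gt

lemma levyDensity_nonneg (a t : ℝ) : 0 ≤ levyDensity a t := by
  unfold levyDensity
  split_ifs <;> positivity

lemma levyDensity_le (ha : 0 ≤ a) {t : ℝ} (ht : 0 < t) :
    levyDensity a t ≤ t ^ (-(3 / 2) : ℝ) := by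
  rw [levyDensity_of_pos a ht]
  exact mul_le_of_le_one_right (by positivity)
    (Real.exp_le_one_iff.2 (neg_nonpos.2 (div_nonneg ha ht.le)))

lemma measurable_levyDensity (a : ℝ) : Measurable (levyDensity a) :=
  Measurable.ite measurableSet_Ioi (by fun_prop) measurable_const

lemma tendsto_levyDensity_nhdsGT_zero (ha : 0 < a) :
    Tendsto (levyDensity a) (𝓝[>] 0) (𝓝 0) := by
  have h := (tendsto_rpow_mul_exp_neg_mul_atTop_nhds_zero (3 / 2) a ha).comp
    tendsto_inv_nhdsGT_zero
  refine h.congr' ?_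
  filter_upwards [self_mem_nhdsWithin] with t (ht : 0 < t)
  rw [levyDensity_of_pos a ht, Function.comp_apply, Real.inv_rpow ht.le, ← Real.rpow_neg ht.le,
    neg_mul, div_eq_mul_inv a t]

lemma continuous_levyDensity (ha : 0 < a) : Continuous (levyDensity a) := by
  refine continuous_iff_continuousAt.2 fun t ↦ ?_
  rcases lt_trichotomy t 0 with ht | rfl | ht
  · refine continuousAt_const.congr (f := fun _ ↦ 0) ?_
    filter_upwards [Iio_mem_nhds ht] with s (hs : s < 0)
    exact (levyDensity_of_nonpos a hs.le).symm
  · have h0 : levyDensity a 0 = 0 := levyDensity_of_nonpos a le_rfl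
    refine continuousAt_iff_continuous_left'_right'.2 ⟨?_, ?_⟩
    · rw [ContinuousWithinAt, h0]
      refine tendsto_const_nhds.congr' ?_
      filter_upwards [self_mem_nhdsWithin] with s (hs : s < 0)
      exact (levyDensity_of_nonpos a hs.le).symm
    · rw [ContinuousWithinAt, h0]
      exact tendsto_levyDensity_nhdsGT_zero ha
  · have h : ContinuousAt (fun t : ℝ ↦ t ^ (-(3 / 2) : ℝ) * Real.exp (-(a / t))) t :=
      (Real.continuousAt_rpow_const _ _ (Or.inl ht.ne')).mul
        (continuousAt_const.div continuousAt_id ht.ne').neg.rexp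
    refine h.congr ?_
    filter_upwards [Ioi_mem_nhds ht] with s hs
    exact (levyDensity_of_pos a hs).symm

/-- The substitution `t ↦ t⁻¹` turns the Lévy density into a Gamma density. -/
lemma inv_smul_gamma_eq_levyDensity {t : ℝ} (ht : 0 < t) :
    (|(-1 : ℝ)| * t ^ ((-1 : ℝ) - 1)) •
      ((t ^ (-1 : ℝ)) ^ (-(1 / 2) : ℝ) * Real.exp (-(a * t ^ (-1 : ℝ)))) = levyDensity a t := by
  rw [levyDensity_of_pos a ht, ← Real.rpow_mul ht.le, Real.rpow_neg_one t, smul_eq_mul, abs_neg,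
    abs_one, one_mul, ← mul_assoc, ← Real.rpow_add ht, div_eq_mul_inv a t]
  norm_num

lemma integrableOn_levyDensity (ha : 0 < a) : IntegrableOn (levyDensity a) (Set.Ioi 0) := by
  have hgamma :
      IntegrableOn (fun t : ℝ ↦ t ^ (-(1 / 2) : ℝ) * Real.exp (-(a * t))) (Set.Ioi 0) := by
    simpa using integrableOn_rpow_mul_exp_neg_mul_rpow (s := -(1 / 2)) (p := 1) (by norm_num)
      one_pos ha
  exact ((integrableOn_Ioi_comp_rpow_iff _ (p := -1) (by norm_num)).2 hgamma).congr_fun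
    (fun t ht ↦ inv_smul_gamma_eq_levyDensity ht) measurableSet_Ioi

lemma integral_levyDensity (ha : 0 < a) : ∫ t in Set.Ioi 0, levyDensity a t = √(π / a) := by
  rw [← setIntegral_congr_fun measurableSet_Ioi (fun t ht ↦ inv_smul_gamma_eq_levyDensity ht),
    integral_comp_rpow_Ioi (fun t : ℝ ↦ t ^ (-(1 / 2) : ℝ) * Real.exp (-(a * t))) (by norm_num)]
  have h := Real.integral_rpow_mul_exp_neg_mul_Ioi (a := 1 / 2) (by norm_num) ha
  norm_num at h ⊢
  rw [h, Real.Gamma_one_half_eq, ← Real.sqrt_eq_rpow, Real.sqrt_inv, Real.sqrt_div Real.pi_pos.le]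
  ring

lemma norm_levyDensity_mul_cexp_le (a : ℝ) {b : ℂ} (hb : 0 ≤ b.re) {t : ℝ} (ht : 0 < t) :
    ‖(levyDensity a t : ℂ) * cexp (-(b * t))‖ ≤ levyDensity a t := by
  rw [norm_mul, Complex.norm_real, Real.norm_of_nonneg (levyDensity_nonneg a t), Complex.norm_exp]
  refine mul_le_of_le_one_right (levyDensity_nonneg a t) (Real.exp_le_one_iff.2 ?_)
  simpa using mul_nonneg hb ht.le

lemma aestronglyMeasurable_levyDensity_mul {f : ℝ → ℂ} (hf : Measurable f) (μ : Measure ℝ) :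
    AEStronglyMeasurable (fun t ↦ (levyDensity a t : ℂ) * f t) μ :=
  ((Complex.measurable_ofReal.comp (measurable_levyDensity a)).mul hf).aestronglyMeasurable

lemma integrableOn_levyDensity_mul_cexp (ha : 0 < a) {b : ℂ} (hb : 0 ≤ b.re) :
    IntegrableOn (fun t : ℝ ↦ (levyDensity a t : ℂ) * cexp (-(b * t))) (Set.Ioi 0) :=
  (integrableOn_levyDensity ha).mono' (aestronglyMeasurable_levyDensity_mul (by fun_prop) _)
    ((ae_restrict_mem measurableSet_Ioi).mono fun _ ht ↦ norm_levyDensity_mul_cexp_le a hb ht)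

lemma continuousOn_levyLaplace (ha : 0 < a) : ContinuousOn (levyLaplace a) {b | 0 ≤ b.re} :=
  continuousOn_of_dominated
    (fun _ _ ↦ aestronglyMeasurable_levyDensity_mul (by fun_prop) _)
    (fun _ hb ↦ (ae_restrict_mem measurableSet_Ioi).mono
      fun _ ht ↦ norm_levyDensity_mul_cexp_le a hb ht)
    (integrableOn_levyDensity ha) (Eventually.of_forall fun t ↦ by fun_prop)

lemma levyLaplace_zero (ha : 0 < a) : levyLaplace a 0 = √(π / a) := by
  simp [levyLaplace, integral_complex_ofReal, integral_levyDensity ha]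

lemma mul_levyDensity_le (ha : 0 ≤ a) {t : ℝ} (ht : 0 < t) :
    levyDensity a t * t ≤ t ^ (-(1 / 2) : ℝ) := by
  calc levyDensity a t * t ≤ t ^ (-(3 / 2) : ℝ) * t :=
        mul_le_mul_of_nonneg_right (levyDensity_le ha ht) ht.le
    _ = t ^ (-(1 / 2) : ℝ) := by rw [← Real.rpow_add_one ht.ne']; norm_num

lemma hasDerivAt_levyLaplace (ha : 0 < a) {b : ℂ} (hb : 0 < b.re) :
    HasDerivAt (levyLaplace a)
      (∫ t in Set.Ioi (0 : ℝ), (levyDensity a t : ℂ) * (cexp (-(b * t)) * -t)) b := by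
  have hd : 0 < b.re / 2 := half_pos hb
  have hbound : IntegrableOn (fun t : ℝ ↦ t ^ (-(1 / 2) : ℝ) * Real.exp (-(b.re / 2 * t)))
      (Set.Ioi 0) := by
    simpa using integrableOn_rpow_mul_exp_neg_mul_rpow (s := -(1 / 2)) (p := 1) (by norm_num)
      one_pos hd
  refine (hasDerivAt_integral_of_dominated_loc_of_deriv_le
    (F := fun (b : ℂ) (t : ℝ) ↦ (levyDensity a t : ℂ) * cexp (-(b * t)))
    (F' := fun (b : ℂ) (t : ℝ) ↦ (levyDensity a t : ℂ) * (cexp (-(b * t)) * -t))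
    (Metric.ball_mem_nhds b hd)
    (Eventually.of_forall fun _ ↦ aestronglyMeasurable_levyDensity_mul (by fun_prop) _)
    (integrableOn_levyDensity_mul_cexp ha hb.le)
    (aestronglyMeasurable_levyDensity_mul (by fun_prop) _) ?_ hbound ?_).2
  · filter_upwards [ae_restrict_mem measurableSet_Ioi] with t (ht : 0 < t) z hz
    have hre : b.re / 2 ≤ z.re := by
      have h := (abs_re_le_norm (z - b)).trans_lt (mem_ball_iff_norm.1 hz)
      rw [sub_re, abs_lt] at h
      linarith
    have hexp : ‖cexp (-(z * t))‖ ≤ Real.exp (-(b.re / 2 * t)) := by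
      rw [Complex.norm_exp, Real.exp_le_exp]
      simpa using mul_le_mul_of_nonneg_right hre ht.le
    calc ‖(levyDensity a t : ℂ) * (cexp (-(z * t)) * -t)‖
        = levyDensity a t * t * ‖cexp (-(z * t))‖ := by
          rw [norm_mul, norm_mul, norm_neg, Complex.norm_of_nonneg (levyDensity_nonneg a t),
            Complex.norm_of_nonneg ht.le]
          ring
      _ ≤ _ := mul_le_mul (mul_levyDensity_le ha.le ht) hexp (norm_nonneg _) (by positivity)
  · refine Eventually.of_forall fun t z _ ↦ HasDerivAt.const_mul _ ?_
    simpa using ((hasDerivAt_id z).mul_const (t : ℂ)).neg.cexp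

/-- The involution `t ↦ (a / b) / t` exchanges the two terms of the exponent. -/
lemma integral_mul_levyDensity_mul_exp (ha : 0 < a) {b : ℝ} (hb : 0 < b) :
    ∫ t in Set.Ioi (0 : ℝ), levyDensity a t * (Real.exp (-(b * t)) * t) =
      √(a / b) * ∫ t in Set.Ioi (0 : ℝ), levyDensity a t * Real.exp (-(b * t)) := by
  set c := a / b with hc
  have hc0 : 0 < c := div_pos ha hb
  set g : ℝ → ℝ := fun t ↦ levyDensity a t * (Real.exp (-(b * t)) * t)
  have hscale := integral_comp_mul_left_Ioi g 0 hc0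
  have hinv := integral_comp_rpow_Ioi (fun t ↦ g (c * t)) (p := -1) (by norm_num)
  rw [mul_zero] at hscale
  have hsubst : ∫ t in Set.Ioi (0 : ℝ), g t =
      c * ∫ t in Set.Ioi (0 : ℝ), (|(-1 : ℝ)| * t ^ ((-1 : ℝ) - 1)) • g (c * t ^ (-1 : ℝ)) := by
    rw [hinv, hscale, smul_eq_mul, mul_inv_cancel_left₀ hc0.ne']
  rw [hsubst, ← integral_const_mul, ← integral_const_mul]
  refine setIntegral_congr_fun measurableSet_Ioi fun t (ht : 0 < t) ↦ ?_
  have hct : 0 < c * t⁻¹ := by positivity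
  have hexp₁ : a / (c * t⁻¹) = b * t := by rw [hc]; field_simp
  have hexp₂ : b * (c * t⁻¹) = a / t := by rw [hc]; field_simp
  have hpow : c * (|(-1 : ℝ)| * t ^ ((-1 : ℝ) - 1)) * ((c * t⁻¹) ^ (-(3 / 2) : ℝ) * (c * t⁻¹)) =
      √c * t ^ (-(3 / 2) : ℝ) := by
    rw [← Real.rpow_add_one hct.ne', Real.mul_rpow hc0.le (by positivity), ← Real.rpow_neg_one t,
      ← Real.rpow_mul ht.le, abs_neg, abs_one, one_mul, Real.sqrt_eq_rpow]
    calc c * t ^ ((-1 : ℝ) - 1) * (c ^ (-(3 / 2) + 1 : ℝ) * t ^ (-1 * (-(3 / 2) + 1) : ℝ))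
        = (c ^ (-(3 / 2) + 1 : ℝ) * c) * (t ^ ((-1 : ℝ) - 1) * t ^ (-1 * (-(3 / 2) + 1) : ℝ)) := by
          ring
      _ = _ := by
          rw [← Real.rpow_add_one hc0.ne', ← Real.rpow_add ht]
          norm_num
  simp only [g, smul_eq_mul, Real.rpow_neg_one, levyDensity_of_pos a ht, levyDensity_of_pos a hct,
    hexp₁, hexp₂]
  linear_combination Real.exp (-(b * t)) * Real.exp (-(a / t)) * hpow

lemma hasDerivAt_levyLaplace_ofReal (ha : 0 < a) {b : ℝ} (hb : 0 < b) :
    HasDerivAt (fun b : ℝ ↦ levyLaplace a b) (-√(a / b) * levyLaplace a b) b := by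
  refine (hasDerivAt_levyLaplace ha (b := b) (by simpa)).comp_ofReal.congr_deriv ?_
  have h := congrArg ((↑) : ℝ → ℂ) (integral_mul_levyDensity_mul_exp ha hb)
  push_cast [← integral_complex_ofReal] at h
  simp only [levyLaplace, mul_neg, integral_neg, h, neg_mul]

lemma levyLaplace_ofReal (ha : 0 < a) {b : ℝ} (hb : 0 ≤ b) :
    levyLaplace a b = √(π / a) * cexp (-(2 * √a * √b)) := by
  set H : ℝ → ℂ := fun b ↦ levyLaplace a b * cexp (2 * √a * √b)
  have hcont : ContinuousOn H (Set.Icc 0 b) := by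
    have h : ContinuousOn (fun b : ℝ ↦ levyLaplace a b) (Set.Icc 0 b) :=
      (continuousOn_levyLaplace ha).comp Complex.continuous_ofReal.continuousOn
        fun y hy ↦ by simpa using hy.1
    exact h.mul (by fun_prop)
  have hderiv : ∀ y ∈ Set.Ioo 0 b, HasDerivAt H 0 y := by
    intro y hy
    have hs : HasDerivAt (fun b : ℝ ↦ ((√b : ℝ) : ℂ)) ((1 / (2 * √y) : ℝ) : ℂ) y :=
      (Real.hasDerivAt_sqrt hy.1.ne').ofReal_comp
    refine ((hasDerivAt_levyLaplace_ofReal ha hy.1).mul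
      (hs.const_mul (2 * √a : ℂ)).cexp).congr_deriv ?_
    have hy0 : ((√y : ℝ) : ℂ) ≠ 0 := by exact_mod_cast (Real.sqrt_pos.2 hy.1).ne'
    rw [Real.sqrt_div ha.le]
    push_cast
    field_simp
    ring
  have hconst : H b - H 0 = 0 := by
    rw [← intervalIntegral.integral_eq_sub_of_hasDerivAt_of_le hb hcont hderiv
      intervalIntegrable_const, intervalIntegral.integral_zero]
  have hH0 : H 0 = √(π / a) := by simp [H, levyLaplace_zero ha]
  rw [Complex.exp_neg, ← hH0, ← sub_eq_zero.1 hconst, mul_inv_cancel_right₀ (Complex.exp_ne_zero _)]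

lemma levyLaplace_eq_of_re_pos (ha : 0 < a) {b : ℂ} (hb : 0 < b.re) :
    levyLaplace a b = √(π / a) * cexp (-(2 * √a * b ^ (1 / 2 : ℂ))) := by
  have hopen : IsOpen {z : ℂ | 0 < z.re} := isOpen_lt continuous_const continuous_re
  have hleft : AnalyticOnNhd ℂ (levyLaplace a) {z | 0 < z.re} :=
    DifferentiableOn.analyticOnNhd
      (fun z hz ↦ (hasDerivAt_levyLaplace ha hz).differentiableAt.differentiableWithinAt) hopen
  have hright : AnalyticOnNhd ℂ (fun z ↦ √(π / a) * cexp (-(2 * √a * z ^ (1 / 2 : ℂ))))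
      {z | 0 < z.re} := by
    refine DifferentiableOn.analyticOnNhd (fun z (hz : 0 < z.re) ↦ ?_) hopen
    have hslit : z ∈ slitPlane := Or.inl hz
    fun_prop (disch := assumption)
  have hreal : ∃ᶠ z in 𝓝[≠] (1 : ℂ),
      levyLaplace a z = √(π / a) * cexp (-(2 * √a * z ^ (1 / 2 : ℂ))) := by
    have htendsto : Tendsto ((↑) : ℝ → ℂ) (𝓝[≠] 1) (𝓝[≠] (1 : ℂ)) :=
      tendsto_nhdsWithin_of_tendsto_nhds_of_eventually_within _
        ((Complex.continuous_ofReal.tendsto' 1 1 Complex.ofReal_one).mono_left nhdsWithin_le_nhds)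
        (eventually_mem_nhdsWithin.mono fun t ht ↦ by simpa using ht)
    refine htendsto.frequently (Eventually.frequently ?_)
    filter_upwards [nhdsWithin_le_nhds (Ioi_mem_nhds one_pos)] with t (ht : 0 < t)
    rw [levyLaplace_ofReal ha ht.le, Real.sqrt_eq_rpow t, Complex.ofReal_cpow ht.le]
    norm_num
  exact hleft.eqOn_of_preconnected_of_frequently_eq hright
    (convex_halfSpace_re_gt 0).isPreconnected (by simp) hreal hb

lemma levyLaplace_eq (ha : 0 < a) {b : ℂ} (hb : 0 ≤ b.re) :
    levyLaplace a b = √(π / a) * cexp (-(2 * √a * b ^ (1 / 2 : ℂ))) := by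
  have hpath : Tendsto (fun ε : ℝ ↦ b + ε) (𝓝[>] 0) (𝓝[{z | 0 ≤ z.re}] b) := by
    refine tendsto_nhdsWithin_of_tendsto_nhds_of_eventually_within _ ?_ ?_
    · exact (Continuous.tendsto' (by fun_prop) 0 b (by simp)).mono_left nhdsWithin_le_nhds
    · filter_upwards [self_mem_nhdsWithin] with ε (hε : 0 < ε)
      simpa using add_nonneg hb hε.le
  have hleft := (continuousOn_levyLaplace ha b hb).tendsto.comp hpath
  have hsqrt : ContinuousAt (fun z : ℂ ↦ z ^ (1 / 2 : ℂ)) b :=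
    continuousAt_cpow_const_of_re_pos (Or.inl hb) (by norm_num)
  have hright : ContinuousAt (fun z ↦ √(π / a) * cexp (-(2 * √a * z ^ (1 / 2 : ℂ)))) b := by
    fun_prop
  refine tendsto_nhds_unique hleft ((hright.tendsto.comp
    (hpath.mono_right nhdsWithin_le_nhds)).congr' ?_)
  filter_upwards [self_mem_nhdsWithin] with ε (hε : 0 < ε)
  exact (levyLaplace_eq_of_re_pos ha (by simpa using add_pos_of_nonneg_of_pos hb hε)).symm

end Levy

section PowerSums

lemma summable_pnat_rpow {r : ℝ} (hr : r < -1) : Summable fun k : ℕ+ ↦ (k : ℝ) ^ r :=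
  (Real.summable_nat_rpow.2 hr).comp_injective PNat.coe_injective

lemma summable_pnat_rpow_mul_exp_neg_mul_sqrt (r : ℝ) {c : ℝ} (hc : 0 < c) :
    Summable fun n : ℕ+ ↦ (n : ℝ) ^ r * Real.exp (-(c * √n)) := by
  have hlittle : (fun y : ℝ ↦ y ^ r * Real.exp (-(c * √y))) =O[atTop] fun y ↦ y ^ (-2 : ℝ) := by
    have hexp := ((isLittleO_exp_neg_mul_rpow_atTop hc (2 * (-2 - r))).comp_tendsto
      Real.tendsto_sqrt_atTop).isBigO
    refine ((Asymptotics.isBigO_refl (fun y : ℝ ↦ y ^ r) atTop).mul hexp).congr' ?_ ?_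
    · exact Eventually.of_forall fun y ↦ by simp
    · filter_upwards [eventually_gt_atTop 0] with y hy
      rw [Function.comp_apply, Real.sqrt_eq_rpow, ← Real.rpow_mul hy.le, ← Real.rpow_add hy]
      congr 1
      ring
  exact (summable_of_isBigO_nat (Real.summable_nat_rpow.2 (by norm_num))
    (hlittle.comp_tendsto tendsto_natCast_atTop_atTop)).comp_injective PNat.coe_injective

end PowerSums

section ReciprocalSums

/-- The weighted sum `∑ k ^ r * φ (a / k)` over the positive integers. -/
noncomputable def recipSum (r : ℝ) (φ : ℝ → ℝ) (a : ℝ) : ℝ :=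
  ∑' k : ℕ+, (k : ℝ) ^ r * φ (a / k)

variable {r p a : ℝ} {φ φ' : ℝ → ℝ}

lemma norm_rpow_mul_comp_div_le (hφ : ∀ y, 0 ≤ y → |φ y| ≤ y ^ p) (ha : 0 ≤ a) (k : ℕ+) :
    ‖(k : ℝ) ^ r * φ (a / k)‖ ≤ a ^ p * (k : ℝ) ^ (r - p) := by
  calc ‖(k : ℝ) ^ r * φ (a / k)‖ = (k : ℝ) ^ r * |φ (a / k)| := by
        rw [norm_mul, Real.norm_of_nonneg (by positivity), Real.norm_eq_abs]
    _ ≤ (k : ℝ) ^ r * (a / k) ^ p := by gcongr; exact hφ _ (by positivity)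
    _ = a ^ p * (k : ℝ) ^ (r - p) := by
        rw [Real.div_rpow ha (by positivity), Real.rpow_sub (by positivity)]
        ring

lemma summable_rpow_mul_comp_div (hφ : ∀ y, 0 ≤ y → |φ y| ≤ y ^ p) (hr : r - p < -1)
    (ha : 0 ≤ a) : Summable fun k : ℕ+ ↦ (k : ℝ) ^ r * φ (a / k) :=
  ((summable_pnat_rpow hr).mul_left _).of_norm_bounded (norm_rpow_mul_comp_div_le hφ ha)

lemma tendsto_recipSum_nhdsGT_zero (hφ : ∀ y, 0 ≤ y → |φ y| ≤ y ^ p) (hp : 0 < p)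
    (hr : r - p < -1) : Tendsto (recipSum r φ) (𝓝[>] 0) (𝓝 0) := by
  have hbound : Tendsto (fun a : ℝ ↦ a ^ p * ∑' k : ℕ+, (k : ℝ) ^ (r - p)) (𝓝[>] 0) (𝓝 0) := by
    refine Tendsto.mono_left ?_ nhdsWithin_le_nhds
    have hcont : ContinuousAt (fun a : ℝ ↦ a ^ p * ∑' k : ℕ+, (k : ℝ) ^ (r - p)) 0 :=
      (Real.continuousAt_rpow_const 0 p (Or.inr hp.le)).mul continuousAt_const
    simpa [Real.zero_rpow hp.ne'] using hcont.tendsto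
  refine squeeze_zero_norm' ?_ hbound
  filter_upwards [self_mem_nhdsWithin] with a (ha : 0 < a)
  rw [← tsum_mul_left]
  exact tsum_of_norm_bounded ((summable_pnat_rpow hr).mul_left _).hasSum
    (norm_rpow_mul_comp_div_le hφ ha.le)

lemma hasDerivAt_recipSum {p' : ℝ} (hφ : ∀ y, 0 ≤ y → |φ y| ≤ y ^ p) (hr : r - p < -1)
    (hφ' : ∀ y, 0 ≤ y → |φ' y| ≤ y ^ p') (hp' : 0 ≤ p') (hr' : r - 1 - p' < -1)
    (hderiv : ∀ y, 0 < y → HasDerivAt φ (φ' y) y) (ha : 0 < a) :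
    HasDerivAt (recipSum r φ) (recipSum (r - 1) φ' a) a := by
  refine hasDerivAt_tsum_of_isPreconnected (t := Set.Ioo 0 (2 * a))
    (g := fun (k : ℕ+) y ↦ (k : ℝ) ^ r * φ (y / k))
    (g' := fun (k : ℕ+) y ↦ (k : ℝ) ^ (r - 1) * φ' (y / k))
    ((summable_pnat_rpow hr').mul_left ((2 * a) ^ p')) isOpen_Ioo isPreconnected_Ioo
    (fun k y hy ↦ ?_) (fun k y hy ↦ ?_) (y₀ := a) ⟨ha, by linarith⟩
    (summable_rpow_mul_comp_div hφ hr ha.le) ⟨ha, by linarith⟩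
  · have hk : (0 : ℝ) < k := by positivity
    have h : HasDerivAt (fun y : ℝ ↦ y / k) (1 / k) y := (hasDerivAt_id y).div_const _
    refine (((hderiv _ (div_pos hy.1 hk)).comp y h).const_mul ((k : ℝ) ^ r)).congr_deriv ?_
    rw [Real.rpow_sub_one hk.ne']
    ring
  · refine (norm_rpow_mul_comp_div_le hφ' hy.1.le k).trans ?_
    gcongr
    exacts [hy.1.le, hy.2.le]

end ReciprocalSums

section SquareRootSums

/-- The weighted sum `∑ n ^ r * g (2 √(π a n))` over the positive integers. The argument of `g` is
the one produced by Poisson summation. -/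
noncomputable def sqrtSum (r : ℝ) (g : ℝ → ℝ) (a : ℝ) : ℝ :=
  ∑' n : ℕ+, (n : ℝ) ^ r * g (2 * √(π * a * n))

variable {r K a b : ℝ} {g g' : ℝ → ℝ}

lemma norm_rpow_mul_comp_sqrt_le (hg : ∀ u, 0 ≤ u → |g u| ≤ K * Real.exp (-(u / 2)))
    (hb : 0 ≤ b) (hab : b ≤ a) (n : ℕ+) :
    ‖(n : ℝ) ^ r * g (2 * √(π * a * n))‖ ≤
      K * ((n : ℝ) ^ r * Real.exp (-(√(π * b) * √n))) := by
  have hK : 0 ≤ K := by simpa using (abs_nonneg _).trans (hg 0 le_rfl)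
  calc ‖(n : ℝ) ^ r * g (2 * √(π * a * n))‖ = (n : ℝ) ^ r * |g (2 * √(π * a * n))| := by
        rw [norm_mul, Real.norm_of_nonneg (by positivity), Real.norm_eq_abs]
    _ ≤ (n : ℝ) ^ r * (K * Real.exp (-(2 * √(π * a * n) / 2))) := by
        gcongr
        exact hg _ (by positivity)
    _ ≤ (n : ℝ) ^ r * (K * Real.exp (-(√(π * b) * √n))) := by
        rw [mul_div_cancel_left₀ _ two_ne_zero, ← Real.sqrt_mul (by positivity)]
        gcongr
    _ = K * ((n : ℝ) ^ r * Real.exp (-(√(π * b) * √n))) := mul_left_comm ..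

lemma summable_rpow_mul_comp_sqrt (hg : ∀ u, 0 ≤ u → |g u| ≤ K * Real.exp (-(u / 2)))
    (ha : 0 < a) : Summable fun n : ℕ+ ↦ (n : ℝ) ^ r * g (2 * √(π * a * n)) :=
  ((summable_pnat_rpow_mul_exp_neg_mul_sqrt r (by positivity : 0 < √(π * a))).mul_left
    K).of_norm_bounded (norm_rpow_mul_comp_sqrt_le hg ha.le le_rfl)

lemma hasDerivAt_sqrtSum (hg : ∀ u, 0 ≤ u → |g u| ≤ K * Real.exp (-(u / 2))) {K' : ℝ}
    (hg' : ∀ u, 0 ≤ u → |g' u| ≤ K' * Real.exp (-(u / 2)))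
    (hderiv : ∀ u, HasDerivAt g (g' u) u) (ha : 0 < a) :
    HasDerivAt (sqrtSum r g) (√(π / a) * sqrtSum (r + 1 / 2) g' a) a := by
  have hmem : a ∈ Set.Ioi (a / 2) := half_lt_self ha
  have hsum := ((summable_pnat_rpow_mul_exp_neg_mul_sqrt (r + 1 / 2)
    (by positivity : 0 < √(π * (a / 2)))).mul_left K').mul_left √(π / (a / 2))
  rw [sqrtSum, ← tsum_mul_left]
  refine hasDerivAt_tsum_of_isPreconnected hsum isOpen_Ioi isPreconnected_Ioi
    (g := fun (n : ℕ+) y ↦ (n : ℝ) ^ r * g (2 * √(π * y * n)))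
    (g' := fun (n : ℕ+) y ↦ √(π / y) * ((n : ℝ) ^ (r + 1 / 2) * g' (2 * √(π * y * n))))
    (fun n y hy ↦ ?_) (fun n y hy ↦ ?_) hmem (summable_rpow_mul_comp_sqrt hg ha) hmem
  · have hy0 : 0 < y := (half_pos ha).trans hy
    have hn : (0 : ℝ) < n := by positivity
    have harg : HasDerivAt (fun y : ℝ ↦ 2 * √(π * y * n)) (√(π / y) * √n) y := by
      refine (((((hasDerivAt_id y).const_mul π).mul_const (n : ℝ)).sqrt
        (by positivity)).const_mul 2).congr_deriv ?_
      rw [id, Real.sqrt_div Real.pi_pos.le, Real.sqrt_mul (by positivity),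
        Real.sqrt_mul Real.pi_pos.le]
      field_simp
      rw [Real.sq_sqrt Real.pi_pos.le, Real.sq_sqrt hn.le]
    refine (((hderiv _).comp y harg).const_mul ((n : ℝ) ^ r)).congr_deriv ?_
    rw [Real.rpow_add hn, ← Real.sqrt_eq_rpow]
    ring
  · have hy0 : a / 2 < y := hy
    rw [norm_mul, Real.norm_of_nonneg (Real.sqrt_nonneg _)]
    gcongr
    exact norm_rpow_mul_comp_sqrt_le hg' (by positivity) hy0.le n

lemma tendsto_atTop_zero_of_abs_le_exp (hg : ∀ u, 0 ≤ u → |g u| ≤ K * Real.exp (-(u / 2))) :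
    Tendsto g atTop (𝓝 0) := by
  have hexp : Tendsto (fun u : ℝ ↦ K * Real.exp (-(u / 2))) atTop (𝓝 0) := by
    simpa using (Real.tendsto_exp_neg_atTop_nhds_zero.comp
      (tendsto_id.atTop_div_const two_pos)).const_mul K
  exact squeeze_zero_norm' (eventually_atTop.2 ⟨0, hg⟩) hexp

lemma tendsto_sqrtSum_atTop (hg : ∀ u, 0 ≤ u → |g u| ≤ K * Real.exp (-(u / 2))) :
    Tendsto (sqrtSum r g) atTop (𝓝 0) := by
  have hterm (n : ℕ+) : Tendsto (fun a ↦ (n : ℝ) ^ r * g (2 * √(π * a * n))) atTop (𝓝 0) := by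
    have harg : Tendsto (fun a : ℝ ↦ 2 * √(π * a * n)) atTop atTop :=
      (Real.tendsto_sqrt_atTop.comp ((tendsto_id.const_mul_atTop Real.pi_pos).atTop_mul_const
        (by positivity))).const_mul_atTop two_pos
    simpa using ((tendsto_atTop_zero_of_abs_le_exp hg).comp harg).const_mul ((n : ℝ) ^ r)
  have h := tendsto_tsum_of_dominated_convergence
    ((summable_pnat_rpow_mul_exp_neg_mul_sqrt r (by positivity : 0 < √(π * 1))).mul_left K) hterm
    (eventually_atTop.2 ⟨1, fun a ha n ↦ norm_rpow_mul_comp_sqrt_le hg zero_le_one ha n⟩)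
  rwa [tsum_zero] at h

end SquareRootSums

section Poisson

/-- The damped cosine `e ^ (-u) * cos u`. -/
noncomputable def dampedCos (u : ℝ) : ℝ := Real.exp (-u) * Real.cos u

variable {a : ℝ}

lemma abs_exp_neg_mul_le {c : ℝ} (hc : |c| ≤ 1) {u : ℝ} (hu : 0 ≤ u) :
    |Real.exp (-u) * c| ≤ Real.exp (-(u / 2)) := by
  rw [abs_mul, Real.abs_exp]
  refine (mul_le_of_le_one_right (by positivity) hc).trans (Real.exp_le_exp.2 ?_)
  linarith

lemma abs_dampedCos_le (u : ℝ) (hu : 0 ≤ u) : |dampedCos u| ≤ 1 * Real.exp (-(u / 2)) := by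
  rw [one_mul]
  exact abs_exp_neg_mul_le (Real.abs_cos_le_one u) hu

lemma isBigO_levyDensity (ha : 0 ≤ a) :
    (fun t ↦ (levyDensity a t : ℂ)) =O[cocompact ℝ] (|·| ^ (-(3 / 2) : ℝ)) := by
  refine Asymptotics.IsBigO.of_bound 1 (Eventually.of_forall fun t ↦ ?_)
  rw [Complex.norm_of_nonneg (levyDensity_nonneg a t), one_mul, Real.norm_of_nonneg (by positivity)]
  rcases lt_or_ge 0 t with ht | ht
  · simpa only [abs_of_pos ht] using levyDensity_le ha ht
  · rw [levyDensity_of_nonpos a ht]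
    positivity

lemma fourier_levyDensity (a ξ : ℝ) :
    FourierTransform.fourier (fun t ↦ (levyDensity a t : ℂ)) ξ =
      levyLaplace a (2 * π * ξ * I) := by
  rw [Real.fourier_real_eq_integral_exp_smul, levyLaplace, ← integral_indicator measurableSet_Ioi]
  refine integral_congr_ae (Eventually.of_forall fun t ↦ ?_)
  rcases lt_or_ge 0 t with ht | ht
  · simp only [Set.indicator_of_mem (Set.mem_Ioi.2 ht), smul_eq_mul, mul_comm (cexp _)]
    congr 2
    push_cast
    ring
  · simp [levyDensity_of_nonpos a ht, ht]

lemma levyLaplace_conj (a : ℝ) (b : ℂ) :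
    levyLaplace a (starRingEnd ℂ b) = starRingEnd ℂ (levyLaplace a b) := by
  rw [levyLaplace, levyLaplace, ← integral_conj]
  simp [← Complex.exp_conj]

lemma levyLaplace_two_pi_mul_neg_mul_I (a ξ : ℝ) :
    levyLaplace a (2 * π * (-ξ : ℝ) * I) = starRingEnd ℂ (levyLaplace a (2 * π * ξ * I)) := by
  rw [← levyLaplace_conj]
  simp [map_ofNat]

lemma levyLaplace_two_pi_mul_I (ha : 0 < a) {ξ : ℝ} (hξ : 0 ≤ ξ) :
    levyLaplace a (2 * π * ξ * I) = √(π / a) * cexp (-((2 * √(π * a * ξ) : ℝ) * (1 + I))) := by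
  have hsqrt : (2 * π * ξ * I : ℂ) ^ (1 / 2 : ℂ) = √(π * ξ) * (1 + I) := by
    rcases hξ.eq_or_lt with rfl | hξ
    · simp
    have hsq : (2 * π * ξ * I : ℂ) = (√(π * ξ) * (1 + I)) ^ 2 := by
      rw [mul_pow, ← Complex.ofReal_pow, Real.sq_sqrt (by positivity), add_sq, I_sq]
      push_cast
      ring
    rw [hsq, one_div, sq_cpow_two_inv]
    simpa using Real.sqrt_pos.2 (mul_pos Real.pi_pos hξ)
  rw [levyLaplace_eq ha (by simp), hsqrt, mul_right_comm π, Real.sqrt_mul (by positivity) a]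
  push_cast
  congr 2
  ring

lemma norm_levyLaplace_two_pi_mul_I (ha : 0 < a) (ξ : ℝ) :
    ‖levyLaplace a (2 * π * ξ * I)‖ = √(π / a) * Real.exp (-(2 * √(π * a * |ξ|))) := by
  wlog hξ : 0 ≤ ξ generalizing ξ
  · have h := this (-ξ) (by linarith)
    rwa [abs_neg, levyLaplace_two_pi_mul_neg_mul_I, Complex.norm_conj] at h
  rw [levyLaplace_two_pi_mul_I ha hξ, abs_of_nonneg hξ, norm_mul, Complex.norm_exp,
    Complex.norm_of_nonneg (by positivity)]
  simp

lemma re_levyLaplace_two_pi_mul_I (ha : 0 < a) (ξ : ℝ) :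
    (levyLaplace a (2 * π * ξ * I)).re = √(π / a) * dampedCos (2 * √(π * a * |ξ|)) := by
  wlog hξ : 0 ≤ ξ generalizing ξ
  · have h := this (-ξ) (by linarith)
    rwa [abs_neg, levyLaplace_two_pi_mul_neg_mul_I, Complex.conj_re] at h
  rw [levyLaplace_two_pi_mul_I ha hξ, abs_of_nonneg hξ, Complex.re_ofReal_mul, Complex.exp_re,
    dampedCos]
  simp

lemma summable_levyLaplace_int (ha : 0 < a) :
    Summable fun n : ℤ ↦ levyLaplace a (2 * π * (n : ℝ) * I) := by
  have hexp : Summable fun n : ℕ ↦ √(π / a) * Real.exp (-(2 * √(π * a * n))) := by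
    refine (summable_pnat_iff_summable_nat (f := fun n : ℕ ↦
      √(π / a) * Real.exp (-(2 * √(π * a * n))))).1 (Summable.mul_left _ ?_)
    refine (summable_pnat_rpow_mul_exp_neg_mul_sqrt 0
      (by positivity : 0 < 2 * √(π * a))).congr fun n ↦ ?_
    rw [Real.rpow_zero, one_mul, Real.sqrt_mul (by positivity) (n : ℝ), mul_assoc]
  refine Summable.of_norm (Summable.of_nat_of_neg ?_ ?_) <;>
    simpa only [norm_levyLaplace_two_pi_mul_I ha, Int.cast_neg, Int.cast_natCast, abs_neg,
      Nat.abs_cast] using hexp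

lemma tsum_int_levyDensity (a : ℝ) :
    ∑' n : ℤ, levyDensity a n = recipSum (-(3 / 2)) (fun y ↦ Real.exp (-y)) a := by
  have hsupp : Function.support (fun n : ℤ ↦ levyDensity a n) ⊆
      Set.range fun k : ℕ+ ↦ ((k : ℕ) : ℤ) := by
    intro n hn
    have hpos : 0 < n := by
      contrapose! hn
      simpa using levyDensity_of_nonpos a (Int.cast_nonpos.2 hn)
    exact ⟨⟨n.toNat, by lia⟩, by simp [hpos.le]⟩
  rw [← (Nat.cast_injective.comp PNat.coe_injective).tsum_eq hsupp]
  refine tsum_congr fun k ↦ ?_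
  simpa using levyDensity_of_pos a (t := k) (by positivity)

lemma tsum_int_re_levyLaplace (ha : 0 < a) :
    ∑' n : ℤ, (levyLaplace a (2 * π * (n : ℝ) * I)).re =
      √(π / a) * (1 + 2 * sqrtSum 0 dampedCos a) := by
  have hsummable := (Complex.hasSum_re (summable_levyLaplace_int ha).hasSum).summable
  simp only [re_levyLaplace_two_pi_mul_I ha] at hsummable ⊢
  rw [tsum_int_eq_zero_add_two_mul_tsum_pnat (fun n ↦ by simp) hsummable, sqrtSum, tsum_mul_left]
  simp only [Int.cast_zero, abs_zero, mul_zero, Real.sqrt_zero, dampedCos, neg_zero, Real.exp_zero,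
    Real.cos_zero, Int.cast_natCast, Nat.abs_cast, Real.rpow_zero, one_mul]
  ring

/-- Poisson summation for the Lévy density. -/
lemma recipSum_exp_neg (ha : 0 < a) :
    recipSum (-(3 / 2)) (fun y ↦ Real.exp (-y)) a =
      √(π / a) * (1 + 2 * sqrtSum 0 dampedCos a) := by
  have hfourier : Summable fun n : ℤ ↦
      FourierTransform.fourier (fun t ↦ (levyDensity a t : ℂ)) (n : ℝ) := by
    simpa only [fourier_levyDensity] using summable_levyLaplace_int ha
  have hpoisson := Real.tsum_eq_tsum_fourier_of_rpow_decay_of_summable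
    (f := fun t ↦ (levyDensity a t : ℂ))
    (Complex.continuous_ofReal.comp (continuous_levyDensity ha)) (b := 3 / 2) (by norm_num)
    (isBigO_levyDensity ha.le) hfourier 0
  simp only [fourier_levyDensity, QuotientAddGroup.mk_zero, fourier_eval_zero, mul_one, zero_add]
    at hpoisson
  rw [← tsum_int_levyDensity, ← tsum_int_re_levyLaplace ha,
    ← Complex.re_tsum (summable_levyLaplace_int ha), ← hpoisson, ← Complex.ofReal_tsum,
    Complex.ofReal_re]

end Poisson

section Zeta

lemma norm_trapezoid_sub_le {E : Type*} [NormedAddCommGroup E] [NormedSpace ℝ E]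
    {F f f' f'' : ℝ → E} {a M : ℝ} (hF : ∀ t ∈ Set.Icc a (a + 1), HasDerivAt F (f t) t)
    (hf : ∀ t ∈ Set.Icc a (a + 1), HasDerivAt f (f' t) t)
    (hf' : ∀ t ∈ Set.Icc a (a + 1), HasDerivAt f' (f'' t) t)
    (hM : ∀ t ∈ Set.Icc a (a + 1), ‖f'' t‖ ≤ M) :
    ‖(1 / 2 : ℝ) • (f a + f (a + 1)) - (F (a + 1) - F a)‖ ≤ M := by
  set H : ℝ → E := fun v ↦ (v / 2) • (f a + f (a + v)) - (F (a + v) - F a)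
  set H' : ℝ → E := fun v ↦ (1 / 2 : ℝ) • (f a - f (a + v)) + (v / 2) • f' (a + v)
  have hmem {v : ℝ} (hv : v ∈ Set.Icc (0 : ℝ) 1) : a + v ∈ Set.Icc a (a + 1) :=
    ⟨by linarith [hv.1], by linarith [hv.2]⟩
  have hM0 : 0 ≤ M := (norm_nonneg _).trans (hM a ⟨le_rfl, by linarith⟩)
  have hhalf (v : ℝ) : HasDerivAt (fun v : ℝ ↦ v / 2) (1 / 2) v := (hasDerivAt_id v).div_const 2
  have hH (v) (hv : v ∈ Set.Icc (0 : ℝ) 1) : HasDerivAt H (H' v) v := by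
    refine (((hhalf v).smul (((hf _ (hmem hv)).comp_const_add a v).const_add (f a))).sub
      (((hF _ (hmem hv)).comp_const_add a v).sub_const (F a))).congr_deriv ?_
    module
  have hH' (v) (hv : v ∈ Set.Icc (0 : ℝ) 1) : HasDerivAt H' ((v / 2) • f'' (a + v)) v := by
    refine (((((hf _ (hmem hv)).comp_const_add a v).const_sub (f a)).const_smul (1 / 2 : ℝ)).add
      ((hhalf v).smul ((hf' _ (hmem hv)).comp_const_add a v))).congr_deriv ?_
    module
  have hH''_le (v) (hv : v ∈ Set.Ico (0 : ℝ) 1) : ‖(v / 2) • f'' (a + v)‖ ≤ M := by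
    rw [norm_smul, Real.norm_of_nonneg (by linarith [hv.1])]
    exact (mul_le_of_le_one_left (norm_nonneg _) (by linarith [hv.2])).trans
      (hM _ (hmem ⟨hv.1, hv.2.le⟩))
  have hH'_le (v) (hv : v ∈ Set.Ico (0 : ℝ) 1) : ‖H' v‖ ≤ M := by
    have h := norm_image_sub_le_of_norm_deriv_le_segment'
      (fun v hv ↦ (hH' v hv).hasDerivWithinAt) hH''_le v ⟨hv.1, hv.2.le⟩
    have hzero : H' 0 = 0 := by simp [H']
    rw [hzero, sub_zero, sub_zero] at h
    exact h.trans (mul_le_of_le_one_right hM0 hv.2.le)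
  have h := norm_image_sub_le_of_norm_deriv_le_segment_01'
    (fun v hv ↦ (hH v hv).hasDerivWithinAt) hH'_le
  simpa [H] using h

/-- The error of the trapezoidal rule for `(s - 1) * t ^ (-s)` on `[a, a + 1]`. The factor `s - 1`
keeps it entire in `s`; its sum over `a` continues the zeta function to `-1 < re s`. -/
noncomputable def trapezoidDefect (s : ℂ) (a : ℝ) : ℂ :=
  (s - 1) / 2 * ((a : ℂ) ^ (-s) + ((a + 1 : ℝ) : ℂ) ^ (-s)) +
    (((a + 1 : ℝ) : ℂ) ^ (1 - s) - (a : ℂ) ^ (1 - s))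

lemma hasDerivAt_ofReal_cpow_of_pos (r : ℂ) {t : ℝ} (ht : 0 < t) :
    HasDerivAt (fun t : ℝ ↦ (t : ℂ) ^ r) (r * (t : ℂ) ^ (r - 1)) t := by
  have hslit : (t : ℂ) ∈ slitPlane := Or.inl (by simpa)
  simpa using ((hasDerivAt_id (t : ℂ)).cpow_const (c := r) hslit).comp_ofReal

lemma norm_trapezoidDefect_le (s : ℂ) (hs : -2 ≤ s.re) {a : ℝ} (ha : 0 < a) :
    ‖trapezoidDefect s a‖ ≤ ‖(s - 1) * (s * (s + 1))‖ * a ^ (-s.re - 2) := by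
  have hderiv (c r : ℂ) (t) (ht : t ∈ Set.Icc a (a + 1)) :
      HasDerivAt (fun t : ℝ ↦ c * (t : ℂ) ^ r) (c * (r * (t : ℂ) ^ (r - 1))) t :=
    (hasDerivAt_ofReal_cpow_of_pos r (ha.trans_le ht.1)).const_mul c
  have h := norm_trapezoid_sub_le (a := a) (F := fun t ↦ -1 * (t : ℂ) ^ (1 - s))
    (f := fun t ↦ (s - 1) * (t : ℂ) ^ (-s))
    (f' := fun t ↦ (s - 1) * (-s) * (t : ℂ) ^ (-s - 1))
    (f'' := fun t ↦ (s - 1) * (-s) * ((-s - 1) * (t : ℂ) ^ (-s - 1 - 1)))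
    (M := ‖(s - 1) * (s * (s + 1))‖ * a ^ (-s.re - 2))
    (fun t ht ↦ (hderiv (-1) (1 - s) t ht).congr_deriv (by ring_nf))
    (fun t ht ↦ (hderiv (s - 1) (-s) t ht).congr_deriv (by ring))
    (fun t ht ↦ hderiv _ _ t ht) (fun t ht ↦ ?_)
  · refine (congrArg norm ?_).trans_le h
    rw [trapezoidDefect, Complex.real_smul]
    push_cast
    ring
  · have hexponent : (-s - 1 - 1).re = -s.re - 2 := by
      simp only [sub_re, neg_re, one_re]
      ring
    rw [show (s - 1) * (-s) * ((-s - 1) * (t : ℂ) ^ (-s - 1 - 1)) =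
      (s - 1) * (s * (s + 1)) * (t : ℂ) ^ (-s - 1 - 1) by ring, norm_mul,
      Complex.norm_cpow_eq_rpow_re_of_pos (ha.trans_le ht.1), hexponent]
    exact mul_le_mul_of_nonneg_left
      (Real.rpow_le_rpow_of_nonpos ha ht.1 (by linarith)) (norm_nonneg _)

lemma norm_trapezoidDefect_le_of_mem {R δ : ℝ} {s : ℂ} (hR : ‖s‖ ≤ R) (hδ : 0 ≤ δ)
    (hs : δ - 1 ≤ s.re) (n : ℕ) :
    ‖trapezoidDefect s (n + 1)‖ ≤ (R + 1) ^ 3 * ((n + 1 : ℕ) : ℝ) ^ (-1 - δ) := by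
  have hR0 : 0 ≤ R := (norm_nonneg s).trans hR
  have hsub : ‖s - 1‖ ≤ R + 1 := (norm_sub_le s 1).trans (by simpa)
  have hadd : ‖s + 1‖ ≤ R + 1 := (norm_add_le s 1).trans (by simpa)
  refine (norm_trapezoidDefect_le s (by linarith) (by positivity)).trans ?_
  have hpow : (n + 1 : ℝ) ^ (-s.re - 2) ≤ (n + 1 : ℝ) ^ (-1 - δ) :=
    Real.rpow_le_rpow_of_exponent_le (by simp) (by linarith)
  rw [norm_mul, norm_mul]
  push_cast
  calc ‖s - 1‖ * (‖s‖ * ‖s + 1‖) * (n + 1 : ℝ) ^ (-s.re - 2)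
      ≤ (R + 1) * ((R + 1) * (R + 1)) * (n + 1 : ℝ) ^ (-1 - δ) := by
        gcongr
        linarith
    _ = (R + 1) ^ 3 * (n + 1 : ℝ) ^ (-1 - δ) := by ring

lemma summable_trapezoidDefect_bound (R : ℝ) {δ : ℝ} (hδ : 0 < δ) :
    Summable fun n : ℕ ↦ (R + 1) ^ 3 * ((n + 1 : ℕ) : ℝ) ^ (-1 - δ) :=
  ((summable_nat_add_iff 1).2 (Real.summable_nat_rpow.2 (by linarith))).mul_left _

lemma summable_trapezoidDefect {s : ℂ} (hs : -1 < s.re) :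
    Summable fun n : ℕ ↦ trapezoidDefect s (n + 1) :=
  (summable_trapezoidDefect_bound ‖s‖ (by linarith : 0 < s.re + 1)).of_norm_bounded
    (norm_trapezoidDefect_le_of_mem le_rfl (by linarith) (by linarith))

lemma sum_range_trapezoidDefect (s : ℂ) (N : ℕ) :
    ∑ n ∈ range N, trapezoidDefect s (n + 1) =
      (s - 1) * (∑ n ∈ range (N + 1), ((n + 1 : ℝ) : ℂ) ^ (-s) - ((N + 1 : ℝ) : ℂ) ^ (-s) / 2) +
        ((N + 1 : ℝ) : ℂ) ^ (1 - s) - (s + 1) / 2 := by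
  induction N with
  | zero =>
    simp
    ring
  | succ N ih =>
    rw [sum_range_succ, ih, sum_range_succ _ (N + 1), trapezoidDefect]
    push_cast
    ring

lemma differentiable_trapezoidDefect {a : ℝ} (ha : 0 < a) :
    Differentiable ℂ fun s ↦ trapezoidDefect s a := by
  have hbase : (a : ℂ) ≠ 0 := by exact_mod_cast ha.ne'
  have hbase_succ : ((a + 1 : ℝ) : ℂ) ≠ 0 := by exact_mod_cast (by positivity : a + 1 ≠ 0)
  intro s
  unfold trapezoidDefect
  fun_prop (disch := exact Or.inl ‹_›)

lemma hasSum_riemannZeta {s : ℂ} (hs : 1 < s.re) :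
    HasSum (fun n : ℕ ↦ ((n + 1 : ℝ) : ℂ) ^ (-s)) (riemannZeta s) := by
  have hsum : Summable fun n : ℕ ↦ 1 / ((n : ℂ) + 1) ^ s := by
    simpa using (summable_nat_add_iff 1).2 (Complex.summable_one_div_nat_cpow.2 hs)
  have h := hsum.hasSum
  rw [← zeta_eq_tsum_one_div_nat_add_one_cpow hs] at h
  simpa [Complex.cpow_neg] using h

lemma tendsto_natCast_add_one_cpow_atTop {s : ℂ} (hs : s.re < 0) :
    Tendsto (fun N : ℕ ↦ ((N + 1 : ℝ) : ℂ) ^ s) atTop (𝓝 0) := by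
  rw [tendsto_zero_iff_norm_tendsto_zero]
  have h := (tendsto_rpow_neg_atTop (neg_pos.2 hs)).comp
    (tendsto_atTop_add_const_right _ (1 : ℝ) tendsto_natCast_atTop_atTop)
  refine h.congr fun N ↦ ?_
  rw [Complex.norm_cpow_eq_rpow_re_of_pos (by positivity), neg_neg, Function.comp_apply]

lemma riemannZeta₁_eq_sub_one_mul {s : ℂ} (hs : s ≠ 1) :
    riemannZeta₁ s = (s - 1) * riemannZeta s := by
  rw [riemannZeta_eq_inv_sub_mul hs, mul_inv_cancel_left₀ (sub_ne_zero.2 hs)]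

lemma tsum_trapezoidDefect_of_one_lt_re {s : ℂ} (hs : 1 < s.re) :
    ∑' n : ℕ, trapezoidDefect s (n + 1) = riemannZeta₁ s - (s + 1) / 2 := by
  have hne : s ≠ 1 := by
    rintro rfl
    simp at hs
  have hpartial := (((hasSum_riemannZeta hs).tendsto_sum_nat.comp (tendsto_add_atTop_nat 1)).sub
    ((tendsto_natCast_add_one_cpow_atTop (s := -s) (by simp; linarith)).div_const 2)).const_mul
      (s - 1)
  have hlim := (hpartial.add (tendsto_natCast_add_one_cpow_atTop (s := 1 - s)
    (by simpa using hs))).sub_const ((s + 1) / 2)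
  have htsum := (summable_trapezoidDefect (by linarith : -1 < s.re)).hasSum.tendsto_sum_nat
  simp only [sum_range_trapezoidDefect] at htsum
  rw [tendsto_nhds_unique htsum hlim, riemannZeta₁_eq_sub_one_mul hne]
  ring

/-- Analytic continuation of the zeta function by the trapezoidal rule. -/
lemma tsum_trapezoidDefect {s : ℂ} (hs : -1 < s.re) :
    ∑' n : ℕ, trapezoidDefect s (n + 1) = riemannZeta₁ s - (s + 1) / 2 := by
  obtain ⟨δ, hδ, hlt⟩ := exists_between (lt_min (by linarith : 0 < s.re + 1) one_pos)
  obtain ⟨hδs, hδ_lt⟩ := lt_min_iff.1 hlt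
  set R : ℝ := ‖s‖ + 3
  set U : Set ℂ := Metric.ball 0 R ∩ {z | δ - 1 < z.re}
  have hU : IsOpen U := Metric.isOpen_ball.inter (isOpen_lt continuous_const continuous_re)
  have hconn : IsPreconnected U :=
    ((convex_ball 0 R).inter (convex_halfSpace_re_gt (δ - 1))).isPreconnected
  have hleft : AnalyticOnNhd ℂ (fun s ↦ ∑' n : ℕ, trapezoidDefect s (n + 1)) U := by
    refine DifferentiableOn.analyticOnNhd (Complex.differentiableOn_tsum_of_summable_norm
      (summable_trapezoidDefect_bound R hδ)
      (fun n ↦ (differentiable_trapezoidDefect (by positivity)).differentiableOn) hU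
      fun n z hz ↦ norm_trapezoidDefect_le_of_mem ?_ hδ.le (le_of_lt hz.2) n) hU
    simpa using (Metric.mem_ball.1 hz.1).le
  have hright : AnalyticOnNhd ℂ (fun s ↦ riemannZeta₁ s - (s + 1) / 2) U :=
    (differentiable_riemannZeta₁.sub (by fun_prop)).differentiableOn.analyticOnNhd hU
  have htwo : (2 : ℂ) ∈ U := by
    have hR : 2 < R := by linarith [norm_nonneg s, show R = ‖s‖ + 3 from rfl]
    exact ⟨by simpa, by simpa using (by linarith : δ - 1 < 2)⟩
  refine hleft.eqOn_of_preconnected_of_eventuallyEq hright hconn htwo ?_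
    ⟨by simp [R], sub_lt_iff_lt_add.2 hδs⟩
  filter_upwards [(isOpen_lt continuous_const continuous_re).mem_nhds
    (by simp : (1 : ℝ) < (2 : ℂ).re)] with z hz
  exact tsum_trapezoidDefect_of_one_lt_re hz

lemma tendsto_sum_cpow_sub {s : ℂ} (hs : -1 < s.re) (hs' : s ≠ 1) :
    Tendsto (fun N : ℕ ↦ ∑ n ∈ range (N + 1), ((n + 1 : ℝ) : ℂ) ^ (-s) -
      ((N + 1 : ℝ) : ℂ) ^ (-s) / 2 - ((N + 1 : ℝ) : ℂ) ^ (1 - s) / (1 - s)) atTop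
      (𝓝 (riemannZeta s)) := by
  have hsub : s - 1 ≠ 0 := sub_ne_zero.2 hs'
  have hsub' : 1 - s ≠ 0 := sub_ne_zero.2 hs'.symm
  have h := (summable_trapezoidDefect hs).hasSum.tendsto_sum_nat
  rw [tsum_trapezoidDefect hs, riemannZeta₁_eq_sub_one_mul hs'] at h
  have hdiv := ((h.add_const ((s + 1) / 2)).div_const (s - 1))
  rw [sub_add_cancel, mul_div_cancel_left₀ _ hsub] at hdiv
  refine hdiv.congr fun N ↦ ?_
  rw [sum_range_trapezoidDefect]
  field_simp
  ring

/-- The value of the Riemann zeta function at a real point, as a real number, so that the whole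
computation can be carried out in `ℝ`. -/
noncomputable def realZeta (σ : ℝ) : ℝ := (riemannZeta σ).re

lemma ofReal_realZeta (σ : ℝ) : (realZeta σ : ℂ) = riemannZeta σ := by
  refine Complex.conj_eq_iff_re.1 ?_
  rw [← riemannZeta_conj, Complex.conj_ofReal]

lemma tendsto_sum_rpow_sub {σ : ℝ} (hσ : -1 < σ) (hσ' : σ ≠ 1) :
    Tendsto (fun N : ℕ ↦ ∑ n ∈ range (N + 1), (n + 1 : ℝ) ^ (-σ) -
      (N + 1 : ℝ) ^ (-σ) / 2 - (N + 1 : ℝ) ^ (1 - σ) / (1 - σ)) atTop (𝓝 (realZeta σ)) := by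
  have h := tendsto_sum_cpow_sub (s := σ) (by simpa) (by exact_mod_cast hσ')
  rw [← ofReal_realZeta] at h
  refine (Complex.continuous_re.continuousAt.tendsto.comp h).congr fun N ↦ ?_
  have hcast (n : ℕ) (r : ℝ) : ((n + 1 : ℝ) : ℂ) ^ (r : ℂ) = ((n + 1 : ℝ) ^ r : ℝ) :=
    (Complex.ofReal_cpow (by positivity) r).symm
  rw [Function.comp_apply, ← Complex.ofReal_re (_ - _)]
  push_cast [← hcast]
  rfl

lemma tsum_pnat_rpow {σ : ℝ} (hσ : 1 < σ) : ∑' k : ℕ+, (k : ℝ) ^ (-σ) = realZeta σ := by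
  rw [tsum_pnat_eq_tsum_succ (f := fun k : ℕ ↦ (k : ℝ) ^ (-σ)), ← Complex.ofReal_inj,
    ofReal_realZeta, ← (hasSum_riemannZeta (s := σ) (by simpa)).tsum_eq, Complex.ofReal_tsum]
  refine tsum_congr fun n ↦ ?_
  rw [Complex.ofReal_cpow (by positivity)]
  push_cast
  rfl

lemma realZeta_one_sub {σ : ℝ} (hσ : 1 < σ) :
    realZeta (1 - σ) =
      2 * (2 * π) ^ (-σ) * Real.Gamma σ * Real.cos (π * σ / 2) * realZeta σ := by
  have h := riemannZeta_one_sub (s := σ) (fun n ↦ ?_) (by exact_mod_cast hσ.ne')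
  · rw [← Complex.ofReal_inj, ofReal_realZeta]
    push_cast [Complex.ofReal_cpow (by positivity : 0 ≤ 2 * π), ← Complex.Gamma_ofReal,
      ofReal_realZeta]
    exact h
  · have hn : σ ≠ -n := by linarith [n.cast_nonneg (α := ℝ)]
    exact_mod_cast hn

lemma realZeta_neg_half : realZeta (-(1 / 2)) = -realZeta (3 / 2) / (4 * π) := by
  have h := realZeta_one_sub (σ := 3 / 2) (by norm_num)
  have hGamma : Real.Gamma (3 / 2) = √π / 2 := by
    rw [show (3 / 2 : ℝ) = 1 / 2 + 1 by norm_num, Real.Gamma_add_one (by norm_num),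
      Real.Gamma_one_half_eq]
    ring
  have hcos : Real.cos (π * (3 / 2) / 2) = -(√2 / 2) := by
    rw [show π * (3 / 2) / 2 = π - π / 4 by ring, Real.cos_pi_sub, Real.cos_pi_div_four]
  have hpow : (2 * π) ^ (-(3 / 2) : ℝ) = 1 / (2 * π * (√2 * √π)) := by
    rw [← Real.sqrt_mul zero_le_two, Real.sqrt_eq_rpow, ← Real.rpow_one_add' (by positivity)
      (by norm_num), Real.rpow_neg (by positivity), one_div]
    norm_num
  rw [show (1 - 3 / 2 : ℝ) = -(1 / 2) by norm_num, hGamma, hcos, hpow] at h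
  rw [h]
  field_simp
  ring

end Zeta

section DampedFunctions

/-- The damped sine `e ^ (-u) * sin u`. -/
noncomputable def dampedSin (u : ℝ) : ℝ := Real.exp (-u) * Real.sin u

/-- The derivative `e ^ (-u) * (cos u - sin u)` of the damped sine. -/
noncomputable def dampedCosSubSin (u : ℝ) : ℝ := dampedCos u - dampedSin u

/-- A primitive of `-(u / 2π) * dampedCosSubSin u`. -/
noncomputable def dampedPrimitive (u : ℝ) : ℝ :=
  -(1 / (2 * π)) * (u * dampedSin u + (dampedSin u + dampedCos u) / 2)

variable {a : ℝ}

lemma abs_dampedSin_le (u : ℝ) (hu : 0 ≤ u) : |dampedSin u| ≤ 1 * Real.exp (-(u / 2)) := by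
  rw [one_mul]
  exact abs_exp_neg_mul_le (Real.abs_sin_le_one u) hu

lemma abs_dampedCosSubSin_le (u : ℝ) (hu : 0 ≤ u) :
    |dampedCosSubSin u| ≤ 2 * Real.exp (-(u / 2)) := by
  rw [dampedCosSubSin]
  linarith [abs_sub (dampedCos u) (dampedSin u), abs_dampedCos_le u hu, abs_dampedSin_le u hu]

lemma abs_mul_exp_neg_mul_le {c : ℝ} (hc : |c| ≤ 1) {u : ℝ} (hu : 0 ≤ u) :
    |u * (Real.exp (-u) * c)| ≤ 2 * Real.exp (-(u / 2)) := by
  have hlin : u ≤ 2 * Real.exp (u / 2) := by linarith [Real.add_one_le_exp (u / 2)]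
  calc |u * (Real.exp (-u) * c)| = u * Real.exp (-u) * |c| := by
        rw [abs_mul, abs_mul, abs_of_nonneg hu, Real.abs_exp, mul_assoc]
    _ ≤ 2 * Real.exp (u / 2) * Real.exp (-u) * 1 := by gcongr
    _ = 2 * Real.exp (-(u / 2)) := by
        rw [mul_one, mul_assoc, ← Real.exp_add]
        ring_nf

lemma abs_mul_dampedCosSubSin_le (u : ℝ) (hu : 0 ≤ u) :
    |u * dampedCosSubSin u| ≤ 4 * Real.exp (-(u / 2)) := by
  have hcos := abs_mul_exp_neg_mul_le (Real.abs_cos_le_one u) hu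
  have hsin := abs_mul_exp_neg_mul_le (Real.abs_sin_le_one u) hu
  rw [dampedCosSubSin, mul_sub]
  exact (abs_sub _ _).trans (by unfold dampedCos dampedSin; linarith)

lemma one_div_two_pi_le_one : 1 / (2 * π) ≤ 1 := by
  rw [div_le_one (by positivity)]
  linarith [Real.pi_gt_three]

lemma abs_dampedPrimitive_le (u : ℝ) (hu : 0 ≤ u) :
    |dampedPrimitive u| ≤ 3 * Real.exp (-(u / 2)) := by
  have hsin := abs_mul_exp_neg_mul_le (Real.abs_sin_le_one u) hu
  rw [dampedPrimitive, abs_mul, abs_neg, abs_of_pos (by positivity)]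
  refine (mul_le_of_le_one_left (abs_nonneg _) one_div_two_pi_le_one).trans
    ((abs_add_le _ _).trans ?_)
  rw [abs_div, abs_two]
  unfold dampedSin at *
  linarith [abs_add_le (Real.exp (-u) * Real.sin u) (dampedCos u), abs_dampedCos_le u hu,
    abs_exp_neg_mul_le (Real.abs_sin_le_one u) hu]

lemma hasDerivAt_exp_neg (u : ℝ) : HasDerivAt (fun u ↦ Real.exp (-u)) (-Real.exp (-u)) u := by
  simpa using (hasDerivAt_neg u).exp

lemma hasDerivAt_dampedSin (u : ℝ) : HasDerivAt dampedSin (dampedCosSubSin u) u := by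
  refine ((hasDerivAt_exp_neg u).mul (Real.hasDerivAt_sin u)).congr_deriv ?_
  rw [dampedCosSubSin, dampedCos, dampedSin]
  ring

lemma hasDerivAt_dampedCos (u : ℝ) :
    HasDerivAt dampedCos (-(dampedCos u + dampedSin u)) u := by
  refine ((hasDerivAt_exp_neg u).mul (Real.hasDerivAt_cos u)).congr_deriv ?_
  rw [dampedCos, dampedSin]
  ring

lemma hasDerivAt_dampedCosSubSin (u : ℝ) :
    HasDerivAt dampedCosSubSin (-2 * dampedCos u) u := by
  refine ((hasDerivAt_dampedCos u).sub (hasDerivAt_dampedSin u)).congr_deriv ?_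
  rw [dampedCosSubSin]
  ring

lemma hasDerivAt_dampedPrimitive (u : ℝ) :
    HasDerivAt dampedPrimitive (-(1 / (2 * π)) * (u * dampedCosSubSin u)) u := by
  refine ((((hasDerivAt_id u).mul (hasDerivAt_dampedSin u)).add
    (((hasDerivAt_dampedSin u).add (hasDerivAt_dampedCos u)).div_const 2)).const_mul
      (-(1 / (2 * π)))).congr_deriv ?_
  rw [dampedCosSubSin, id]
  ring

lemma sqrtSum_const_mul (r c : ℝ) (g : ℝ → ℝ) (a : ℝ) :
    sqrtSum r (fun u ↦ c * g u) a = c * sqrtSum r g a := by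
  rw [sqrtSum, sqrtSum, ← tsum_mul_left]
  exact tsum_congr fun n ↦ mul_left_comm ..

lemma sqrtSum_id_mul (r : ℝ) (g : ℝ → ℝ) (ha : 0 ≤ a) :
    sqrtSum r (fun u ↦ u * g u) a = 2 * √(π * a) * sqrtSum (r + 1 / 2) g a := by
  rw [sqrtSum, sqrtSum, ← tsum_mul_left]
  refine tsum_congr fun n ↦ ?_
  rw [Real.rpow_add (by positivity), ← Real.sqrt_eq_rpow, Real.sqrt_mul (by positivity)]
  ring

lemma hasDerivAt_sqrtSum_dampedCosSubSin (ha : 0 < a) :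
    HasDerivAt (sqrtSum (-(1 / 2)) dampedCosSubSin)
      (-2 * √(π / a) * sqrtSum 0 dampedCos a) a := by
  have h := hasDerivAt_sqrtSum (r := -(1 / 2)) (K' := 2) abs_dampedCosSubSin_le (fun u hu ↦ ?_)
    hasDerivAt_dampedCosSubSin ha
  · refine h.congr_deriv ?_
    rw [sqrtSum_const_mul, neg_add_cancel]
    ring
  · rw [abs_mul, abs_neg, abs_two]
    linarith [abs_dampedCos_le u hu]

lemma hasDerivAt_sqrtSum_dampedPrimitive (ha : 0 < a) :
    HasDerivAt (sqrtSum (-(3 / 2)) dampedPrimitive) (-sqrtSum (-(1 / 2)) dampedCosSubSin a) a := by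
  have h := hasDerivAt_sqrtSum (r := -(3 / 2)) (K' := 4) abs_dampedPrimitive_le (fun u hu ↦ ?_)
    hasDerivAt_dampedPrimitive ha
  · have hsqrt : √(π / a) * √(π * a) = π := by
      rw [← Real.sqrt_mul (by positivity), div_mul_eq_mul_div, mul_comm π a, mul_div_assoc,
        mul_div_cancel_left₀ _ ha.ne', ← sq, Real.sqrt_sq Real.pi_pos.le]
    refine h.congr_deriv ?_
    rw [sqrtSum_const_mul, sqrtSum_id_mul _ _ ha.le]
    rw [show -(3 / 2) + 1 / 2 + 1 / 2 = (-(1 / 2) : ℝ) by norm_num]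
    field_simp
    linear_combination (-sqrtSum (-(1 / 2)) dampedCosSubSin a) * hsqrt
  · rw [abs_mul, abs_neg, abs_of_pos (by positivity)]
    exact (mul_le_of_le_one_left (abs_nonneg _) one_div_two_pi_le_one).trans
      (abs_mul_dampedCosSubSin_le u hu)

end DampedFunctions

section SmallArgument

lemma abs_right_endpoint_sub_le {F f f' : ℝ → ℝ} {a M : ℝ}
    (hF : ∀ t ∈ Set.Icc a (a + 1), HasDerivAt F (f t) t)
    (hf : ∀ t ∈ Set.Icc a (a + 1), HasDerivAt f (f' t) t)
    (hM : ∀ t ∈ Set.Icc a (a + 1), |f' t| ≤ M) : |f (a + 1) - (F (a + 1) - F a)| ≤ M := by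
  have hlt : a < a + 1 := lt_add_one a
  obtain ⟨ξ, hξ, hFξ⟩ := exists_hasDerivAt_eq_slope F f hlt
    (fun t ht ↦ (hF t ht).continuousAt.continuousWithinAt)
    fun t ht ↦ hF t (Set.Ioo_subset_Icc_self ht)
  rw [add_sub_cancel_left, div_one] at hFξ
  have hle : ‖f (a + 1) - f ξ‖ ≤ M * (a + 1 - ξ) :=
    norm_image_sub_le_of_norm_deriv_le_segment'
      (fun t ht ↦ (hf t ⟨hξ.1.le.trans ht.1, ht.2⟩).hasDerivWithinAt)
      (fun t ht ↦ hM t ⟨hξ.1.le.trans ht.1, ht.2.le⟩) _ ⟨hξ.2.le, le_rfl⟩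
  have hM0 : 0 ≤ M := (abs_nonneg _).trans (hM a ⟨le_rfl, hlt.le⟩)
  rw [← hFξ]
  exact hle.trans (mul_le_of_le_one_right hM0 (by linarith [hξ.1]))

lemma hasDerivAt_comp_mul_sqrt {g g' : ℝ → ℝ} (hg : ∀ u, HasDerivAt g (g' u) u) (c : ℝ) {t : ℝ}
    (ht : 0 < t) :
    HasDerivAt (fun t ↦ g (c * √t)) (c / 2 * t ^ (-(1 / 2) : ℝ) * g' (c * √t)) t := by
  refine ((hg _).comp t ((Real.hasDerivAt_sqrt ht.ne').const_mul c)).congr_deriv ?_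
  rw [Real.rpow_neg ht.le, ← Real.sqrt_eq_rpow]
  ring

lemma hasDerivAt_rpow_neg_half_mul_comp_mul_sqrt {g g' : ℝ → ℝ}
    (hg : ∀ u, HasDerivAt g (g' u) u) (c : ℝ) {t : ℝ} (ht : 0 < t) :
    HasDerivAt (fun t ↦ t ^ (-(1 / 2) : ℝ) * g (c * √t))
      (t ^ (-(3 / 2) : ℝ) / 2 * (c * √t * g' (c * √t) - g (c * √t))) t := by
  have hpow : t ^ (-(1 / 2) : ℝ) * t ^ (-(1 / 2) : ℝ) = √t * t ^ (-(3 / 2) : ℝ) := by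
    rw [Real.sqrt_eq_rpow, ← Real.rpow_add ht, ← Real.rpow_add ht]
    norm_num
  refine ((Real.hasDerivAt_rpow_const (p := -(1 / 2)) (Or.inl ht.ne')).mul
    (hasDerivAt_comp_mul_sqrt hg c ht)).congr_deriv ?_
  rw [show (-(1 / 2) - 1 : ℝ) = -(3 / 2) by norm_num]
  linear_combination c / 2 * g' (c * √t) * hpow

/-- The error of the right Riemann sum for `t ^ (-1 / 2) * dampedCosSubSin (c * √t)` on
`[n, n + 1]`. -/
noncomputable def dampedDefect (c : ℝ) (n : ℕ) : ℝ :=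
  (n + 1 : ℝ) ^ (-(1 / 2) : ℝ) * dampedCosSubSin (c * √(n + 1)) -
    2 / c * (dampedSin (c * √(n + 1)) - dampedSin (c * √n))

lemma abs_dampedCosSubSin_le_two {u : ℝ} (hu : 0 ≤ u) : |dampedCosSubSin u| ≤ 2 := by
  linarith [abs_dampedCosSubSin_le u hu, Real.exp_le_one_iff.2 (by linarith : -(u / 2) ≤ 0)]

lemma abs_dampedSin_le_self {u : ℝ} (hu : 0 ≤ u) : |dampedSin u| ≤ u := by
  rw [dampedSin, abs_mul, Real.abs_exp]
  have hsin : |Real.sin u| ≤ u := by simpa [abs_of_nonneg hu] using Real.abs_sin_le_abs (x := u)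
  exact (mul_le_of_le_one_left (abs_nonneg _) (Real.exp_le_one_iff.2 (by linarith))).trans hsin

lemma abs_dampedDefect_zero_le {c : ℝ} (hc : 0 < c) : |dampedDefect c 0| ≤ 4 := by
  have hsin : |2 / c * dampedSin c| ≤ 2 := by
    rw [abs_mul, abs_of_pos (by positivity), div_mul_eq_mul_div, div_le_iff₀ hc]
    linarith [abs_dampedSin_le_self hc.le]
  have hzero : dampedDefect c 0 = dampedCosSubSin c - 2 / c * dampedSin c := by
    simp [dampedDefect, dampedSin]
  rw [hzero]
  linarith [abs_sub (dampedCosSubSin c) (2 / c * dampedSin c), abs_dampedCosSubSin_le_two hc.le]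

lemma abs_dampedDefect_le_of_pos {c : ℝ} (hc : 0 < c) {n : ℕ} (hn : 0 < n) :
    |dampedDefect c n| ≤ 3 * (n : ℝ) ^ (-(3 / 2) : ℝ) := by
  have hpos {t : ℝ} (ht : t ∈ Set.Icc (n : ℝ) (n + 1)) : 0 < t :=
    (Nat.cast_pos.2 hn).trans_le ht.1
  have h := abs_right_endpoint_sub_le (a := n) (M := 3 * (n : ℝ) ^ (-(3 / 2) : ℝ))
    (fun t ht ↦ ((hasDerivAt_comp_mul_sqrt hasDerivAt_dampedSin c (hpos ht)).const_mul
      (2 / c)).congr_deriv (by field_simp))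
    (fun t ht ↦ hasDerivAt_rpow_neg_half_mul_comp_mul_sqrt hasDerivAt_dampedCosSubSin c (hpos ht))
    fun t ht ↦ ?_
  · simpa only [dampedDefect, mul_sub] using h
  · have hu : 0 ≤ c * √t := by positivity
    have hbound : |c * √t * (-2 * dampedCos (c * √t)) - dampedCosSubSin (c * √t)| ≤ 6 := by
      have hcos := abs_mul_exp_neg_mul_le (Real.abs_cos_le_one (c * √t)) hu
      have hexp : Real.exp (-(c * √t / 2)) ≤ 1 := Real.exp_le_one_iff.2 (by linarith)
      refine (abs_sub _ _).trans ?_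
      rw [mul_left_comm, abs_mul, abs_neg, abs_two, dampedCos]
      linarith [abs_dampedCosSubSin_le_two hu]
    rw [abs_mul, abs_of_nonneg (div_nonneg (Real.rpow_nonneg (hpos ht).le _) zero_le_two)]
    calc t ^ (-(3 / 2) : ℝ) / 2 * |c * √t * (-2 * dampedCos (c * √t)) - dampedCosSubSin (c * √t)|
        ≤ (n : ℝ) ^ (-(3 / 2) : ℝ) / 2 * 6 := by
          gcongr ?_ / 2 * ?_
          exact Real.rpow_le_rpow_of_nonpos (Nat.cast_pos.2 hn) ht.1 (by norm_num)
      _ = 3 * (n : ℝ) ^ (-(3 / 2) : ℝ) := by ring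

lemma abs_dampedDefect_le {c : ℝ} (hc : 0 < c) (n : ℕ) :
    |dampedDefect c n| ≤ 12 * ((n + 1 : ℕ) : ℝ) ^ (-(3 / 2) : ℝ) := by
  rcases n.eq_zero_or_pos with rfl | hn
  · simpa using (abs_dampedDefect_zero_le hc).trans (by norm_num)
  have hn' : (1 : ℝ) ≤ n := by exact_mod_cast hn
  have htwo : (2 : ℝ) ^ (3 / 2 : ℝ) ≤ 4 := by
    refine (Real.rpow_le_rpow_of_exponent_le one_le_two (by norm_num : (3 / 2 : ℝ) ≤ 2)).trans ?_
    norm_num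
  refine (abs_dampedDefect_le_of_pos hc hn).trans ?_
  calc 3 * (n : ℝ) ^ (-(3 / 2) : ℝ) = 3 * (2 ^ (3 / 2 : ℝ) * (2 * n : ℝ) ^ (-(3 / 2) : ℝ)) := by
        rw [Real.mul_rpow zero_le_two (by positivity), Real.rpow_neg zero_le_two,
          mul_inv_cancel_left₀ (by positivity)]
    _ ≤ 3 * (4 * ((n + 1 : ℕ) : ℝ) ^ (-(3 / 2) : ℝ)) := by
        gcongr 3 * (?_ * ?_)
        refine Real.rpow_le_rpow_of_nonpos (by positivity) ?_ (by norm_num)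
        push_cast
        linarith
    _ = 12 * ((n + 1 : ℕ) : ℝ) ^ (-(3 / 2) : ℝ) := by ring

lemma dampedCosSubSin_zero : dampedCosSubSin 0 = 1 := by
  simp [dampedCosSubSin, dampedCos, dampedSin]

lemma tendsto_div_mul_dampedSin (b : ℝ) :
    Tendsto (fun c ↦ 2 / c * dampedSin (c * b)) (𝓝[>] 0) (𝓝 (2 * b)) := by
  have hderiv : HasDerivAt (fun c ↦ dampedSin (c * b)) b 0 := by
    refine ((hasDerivAt_dampedSin _).comp 0 ((hasDerivAt_id (0 : ℝ)).mul_const b)).congr_deriv ?_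
    simp [dampedCosSubSin_zero]
  refine (hderiv.tendsto_slope_zero_right.const_mul 2).congr fun c ↦ ?_
  simp only [zero_add, zero_mul, smul_eq_mul, dampedSin, Real.sin_zero, mul_zero, sub_zero]
  ring

lemma tendsto_dampedDefect (n : ℕ) :
    Tendsto (dampedDefect · n) (𝓝[>] 0)
      (𝓝 ((n + 1 : ℝ) ^ (-(1 / 2) : ℝ) - 2 * (√(n + 1) - √n))) := by
  have hcont : ContinuousAt (fun c : ℝ ↦ dampedCosSubSin (c * √(n + 1))) 0 :=
    (hasDerivAt_dampedCosSubSin _).continuousAt.comp (f := fun c : ℝ ↦ c * √(n + 1)) (by fun_prop)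
  have hfirst := ((hcont.tendsto.mono_left (nhdsWithin_le_nhds (s := Set.Ioi 0))).const_mul
    ((n + 1 : ℝ) ^ (-(1 / 2) : ℝ)))
  rw [zero_mul, dampedCosSubSin_zero, mul_one] at hfirst
  have h := hfirst.sub ((tendsto_div_mul_dampedSin √(n + 1)).sub (tendsto_div_mul_dampedSin √n))
  simpa only [dampedDefect, mul_sub] using h

lemma tendsto_sum_rpow_neg_half_sub :
    Tendsto (fun N : ℕ ↦ ∑ n ∈ range N, (n + 1 : ℝ) ^ (-(1 / 2) : ℝ) - 2 * √N) atTop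
      (𝓝 (realZeta (1 / 2))) := by
  rw [← tendsto_add_atTop_iff_nat 1]
  have hzero : Tendsto (fun N : ℕ ↦ (N + 1 : ℝ) ^ (-(1 / 2) : ℝ) / 2) atTop (𝓝 0) := by
    simpa using (((tendsto_rpow_neg_atTop one_half_pos).comp (tendsto_atTop_add_const_right _
      (1 : ℝ) tendsto_natCast_atTop_atTop)).div_const 2)
  have h := (tendsto_sum_rpow_sub (σ := 1 / 2) (by norm_num) (by norm_num)).add hzero
  rw [add_zero] at h
  refine h.congr fun N ↦ ?_
  rw [Real.sqrt_eq_rpow]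
  norm_num
  ring

lemma tsum_rpow_neg_half_sub :
    ∑' n : ℕ, ((n + 1 : ℝ) ^ (-(1 / 2) : ℝ) - 2 * (√(n + 1) - √n)) = realZeta (1 / 2) := by
  have hnonpos (n : ℕ) : 0 ≤ -((n + 1 : ℝ) ^ (-(1 / 2) : ℝ) - 2 * (√(n + 1) - √n)) := by
    have hmul : (√(n + 1) - √n) * (√(n + 1) + √n) = 1 := by
      rw [mul_comm, ← sq_sub_sq, Real.sq_sqrt (by positivity), Real.sq_sqrt (by positivity)]
      ring
    have hle : √n ≤ √(n + 1) := Real.sqrt_le_sqrt (by linarith)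
    rw [Real.rpow_neg (by positivity), ← Real.sqrt_eq_rpow, neg_nonneg, sub_nonpos,
      inv_le_iff_one_le_mul₀ (by positivity)]
    nlinarith
  have h := (hasSum_iff_tendsto_nat_of_nonneg hnonpos (-realZeta (1 / 2))).2
    (tendsto_sum_rpow_neg_half_sub.neg.congr fun N ↦ ?_)
  · simpa using h.neg.tsum_eq
  · have htele := sum_range_sub (fun n : ℕ ↦ √(n : ℝ)) N
    rw [Nat.cast_zero, Real.sqrt_zero, sub_zero] at htele
    rw [sum_neg_distrib, sum_sub_distrib, ← mul_sum, ← htele]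
    push_cast
    rfl

lemma summable_dampedDefect_bound :
    Summable fun n : ℕ ↦ 12 * ((n + 1 : ℕ) : ℝ) ^ (-(3 / 2) : ℝ) :=
  ((summable_nat_add_iff 1).2 (Real.summable_nat_rpow.2 (by norm_num))).mul_left 12

lemma sqrtSum_eq_tsum_dampedDefect {a : ℝ} (ha : 0 < a) :
    sqrtSum (-(1 / 2)) dampedCosSubSin a = ∑' n, dampedDefect (2 * √(π * a)) n := by
  set c : ℝ := 2 * √(π * a)
  have hc : 0 < c := by positivity
  have hsum : HasSum (fun n : ℕ ↦ (n + 1 : ℝ) ^ (-(1 / 2) : ℝ) * dampedCosSubSin (c * √(n + 1)))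
      (sqrtSum (-(1 / 2)) dampedCosSubSin a) := by
    have h := (hasSum_pnat_iff_hasSum_succ (f := fun n : ℕ ↦
      (n : ℝ) ^ (-(1 / 2) : ℝ) * dampedCosSubSin (2 * √(π * a * n)))).1
        (summable_rpow_mul_comp_sqrt abs_dampedCosSubSin_le ha).hasSum
    refine h.congr_fun fun n ↦ ?_
    rw [Real.sqrt_mul (by positivity) ((n + 1 : ℕ) : ℝ), ← mul_assoc]
    push_cast
    rfl
  have hsin : Tendsto (fun N : ℕ ↦ dampedSin (c * √N)) atTop (𝓝 0) := by
    have hcN : Tendsto (fun N : ℕ ↦ c * √N) atTop atTop :=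
      (Real.tendsto_sqrt_atTop.comp tendsto_natCast_atTop_atTop).const_mul_atTop hc
    exact (tendsto_atTop_zero_of_abs_le_exp abs_dampedSin_le).comp hcN
  have hdefect := (summable_dampedDefect_bound.of_norm_bounded (f := dampedDefect c)
    fun n ↦ abs_dampedDefect_le hc n).hasSum.tendsto_sum_nat
  refine tendsto_nhds_unique ?_ hdefect
  have h := hsum.tendsto_sum_nat.sub (hsin.const_mul (2 / c))
  rw [mul_zero, sub_zero] at h
  refine h.congr fun N ↦ ?_
  have htele := sum_range_sub (fun n : ℕ ↦ dampedSin (c * √n)) N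
  have hzero : dampedSin (c * √(0 : ℕ)) = 0 := by simp [dampedSin]
  rw [hzero, sub_zero] at htele
  simp only [dampedDefect]
  rw [sum_sub_distrib, ← mul_sum, ← htele]
  push_cast
  rfl

lemma tendsto_sqrt_pi_mul_nhdsGT_zero : Tendsto (fun a ↦ √(π * a)) (𝓝[>] 0) (𝓝 0) := by
  have hcont : Continuous fun a ↦ √(π * a) := by fun_prop
  simpa using (hcont.tendsto 0).mono_left nhdsWithin_le_nhds

lemma tendsto_sqrtSum_dampedCosSubSin_nhdsGT_zero :
    Tendsto (sqrtSum (-(1 / 2)) dampedCosSubSin) (𝓝[>] 0) (𝓝 (realZeta (1 / 2))) := by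
  have harg : Tendsto (fun a ↦ 2 * √(π * a)) (𝓝[>] 0) (𝓝[>] 0) := by
    refine tendsto_nhdsWithin_iff.2 ⟨?_, ?_⟩
    · simpa using tendsto_sqrt_pi_mul_nhdsGT_zero.const_mul 2
    · filter_upwards [self_mem_nhdsWithin] with a (ha : 0 < a)
      exact mul_pos two_pos (Real.sqrt_pos.2 (by positivity))
  have h := tendsto_tsum_of_dominated_convergence summable_dampedDefect_bound
    (fun n ↦ (tendsto_dampedDefect n).comp harg) ?_
  · rw [tsum_rpow_neg_half_sub] at h
    refine h.congr' ?_
    filter_upwards [self_mem_nhdsWithin] with a (ha : 0 < a)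
    exact (sqrtSum_eq_tsum_dampedDefect ha).symm
  · filter_upwards [self_mem_nhdsWithin] with a (ha : 0 < a) n
    exact abs_dampedDefect_le (by positivity) n

lemma tendsto_sqrtSum_dampedPrimitive_nhdsGT_zero :
    Tendsto (sqrtSum (-(3 / 2)) dampedPrimitive) (𝓝[>] 0) (𝓝 (realZeta (-(1 / 2)))) := by
  have hterm (n : ℕ+) : Tendsto (fun a ↦ (n : ℝ) ^ (-(3 / 2) : ℝ) *
      dampedPrimitive (2 * √(π * a * n))) (𝓝[>] 0) (𝓝 ((n : ℝ) ^ (-(3 / 2) : ℝ) *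
        dampedPrimitive 0)) := by
    have hcont : ContinuousAt (fun a : ℝ ↦ dampedPrimitive (2 * √(π * a * n))) 0 :=
      (hasDerivAt_dampedPrimitive _).continuousAt.comp (f := fun a : ℝ ↦ 2 * √(π * a * n))
        (by fun_prop)
    simpa using (hcont.tendsto.mono_left nhdsWithin_le_nhds).const_mul _
  have hlim := tendsto_tsum_of_dominated_convergence
    ((summable_pnat_rpow (by norm_num : (-(3 / 2) : ℝ) < -1)).mul_left 3) hterm ?_
  · have hzero : dampedPrimitive 0 = -(1 / (4 * π)) := by
      simp [dampedPrimitive, dampedSin, dampedCos]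
      ring
    have hlim_eq : ∑' n : ℕ+, (n : ℝ) ^ (-(3 / 2) : ℝ) * dampedPrimitive 0 =
        realZeta (-(1 / 2)) := by
      rw [tsum_mul_right, tsum_pnat_rpow (by norm_num), hzero, realZeta_neg_half]
      ring
    rwa [hlim_eq] at hlim
  · filter_upwards [self_mem_nhdsWithin] with a (ha : 0 < a) n
    have hprim : |dampedPrimitive (2 * √(π * a * n))| ≤ 3 := by
      refine (abs_dampedPrimitive_le _ (by positivity)).trans
        (mul_le_of_le_one_right (by norm_num) (Real.exp_le_one_iff.2 ?_))
      have := Real.sqrt_nonneg (π * a * n)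
      linarith
    rw [norm_mul, Real.norm_of_nonneg (by positivity), mul_comm]
    exact mul_le_mul_of_nonneg_right hprim (by positivity)

end SmallArgument

section ReciprocalSumFormulas

variable {a : ℝ}

lemma eq_of_hasDerivAt_zero_of_tendsto_nhdsGT_zero {f : ℝ → ℝ} {c : ℝ}
    (hf : ∀ a, 0 < a → HasDerivAt f 0 a) (hlim : Tendsto f (𝓝[>] 0) (𝓝 c)) (ha : 0 < a) :
    f a = c := by
  have hconst {b : ℝ} (hb : 0 < b) : f b = f a :=
    isOpen_Ioi.is_const_of_deriv_eq_zero isPreconnected_Ioi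
      (fun b hb ↦ (hf b hb).differentiableAt.differentiableWithinAt)
      (fun b hb ↦ (hf b hb).deriv) hb ha
  refine tendsto_nhds_unique (tendsto_const_nhds.congr' ?_) hlim
  filter_upwards [self_mem_nhdsWithin] with b (hb : 0 < b)
  exact (hconst hb).symm

lemma abs_one_sub_exp_neg_le (y : ℝ) (hy : 0 ≤ y) : |1 - Real.exp (-y)| ≤ y ^ (1 : ℝ) := by
  rw [Real.rpow_one, abs_of_nonneg (sub_nonneg.2 (Real.exp_le_one_iff.2 (by linarith)))]
  linarith [Real.one_sub_le_exp_neg y]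

lemma abs_exp_neg_sub_one_add_le (y : ℝ) (hy : 0 ≤ y) :
    |Real.exp (-y) - 1 + y| ≤ y ^ (2 : ℝ) := by
  rw [Real.rpow_two, abs_of_nonneg (by linarith [Real.one_sub_le_exp_neg y])]
  have hexp : Real.exp (-y) * (y + 1) ≤ 1 := by
    calc Real.exp (-y) * (y + 1) ≤ Real.exp (-y) * Real.exp y := by
          gcongr
          exact Real.add_one_le_exp y
      _ = 1 := by rw [← Real.exp_add, neg_add_cancel, Real.exp_zero]
  nlinarith [Real.one_sub_le_exp_neg y]

lemma hasDerivAt_recipSum_one_sub_exp_neg (ha : 0 < a) :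
    HasDerivAt (recipSum (-(1 / 2)) fun y ↦ 1 - Real.exp (-y))
      (√(π / a) * (1 + 2 * sqrtSum 0 dampedCos a)) a := by
  have h := hasDerivAt_recipSum (r := -(1 / 2)) (p' := 0) (φ' := fun y ↦ Real.exp (-y))
    abs_one_sub_exp_neg_le (by norm_num)
    (fun y hy ↦ by simpa using hy) le_rfl (by norm_num)
    (fun y _ ↦ ((hasDerivAt_exp_neg y).const_sub 1).congr_deriv (neg_neg _)) ha
  rwa [show (-(1 / 2) - 1 : ℝ) = -(3 / 2) by norm_num, recipSum_exp_neg ha] at h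

lemma hasDerivAt_recipSum_exp_neg_sub_one_add (ha : 0 < a) :
    HasDerivAt (recipSum (1 / 2) fun y ↦ Real.exp (-y) - 1 + y)
      (recipSum (-(1 / 2)) (fun y ↦ 1 - Real.exp (-y)) a) a := by
  have h := hasDerivAt_recipSum (r := 1 / 2) abs_exp_neg_sub_one_add_le (by norm_num)
    abs_one_sub_exp_neg_le zero_le_one (by norm_num)
    (fun y _ ↦ (((hasDerivAt_exp_neg y).sub_const 1).add (hasDerivAt_id y)).congr_deriv
      (neg_add_eq_sub _ _)) ha
  rwa [show (1 / 2 - 1 : ℝ) = -(1 / 2) by norm_num] at h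

lemma hasDerivAt_sqrt_pi_mul (ha : 0 < a) : HasDerivAt (fun a ↦ √(π * a)) (√(π / a) / 2) a := by
  refine (((hasDerivAt_id a).const_mul π).sqrt (by positivity)).congr_deriv ?_
  rw [id, Real.sqrt_div Real.pi_pos.le, Real.sqrt_mul Real.pi_pos.le]
  field_simp
  rw [Real.sq_sqrt Real.pi_pos.le]

lemma recipSum_one_sub_exp_neg (ha : 0 < a) :
    recipSum (-(1 / 2)) (fun y ↦ 1 - Real.exp (-y)) a =
      2 * √(π * a) + realZeta (1 / 2) - sqrtSum (-(1 / 2)) dampedCosSubSin a := by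
  have h := eq_of_hasDerivAt_zero_of_tendsto_nhdsGT_zero
    (f := fun a ↦ recipSum (-(1 / 2)) (fun y ↦ 1 - Real.exp (-y)) a - 2 * √(π * a) +
      sqrtSum (-(1 / 2)) dampedCosSubSin a) (c := 0 - 2 * 0 + realZeta (1 / 2))
    (fun a ha ↦ (((hasDerivAt_recipSum_one_sub_exp_neg ha).sub
      ((hasDerivAt_sqrt_pi_mul ha).const_mul 2)).add
        (hasDerivAt_sqrtSum_dampedCosSubSin ha)).congr_deriv (by ring))
    (((tendsto_recipSum_nhdsGT_zero abs_one_sub_exp_neg_le one_pos (by norm_num)).sub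
      (tendsto_sqrt_pi_mul_nhdsGT_zero.const_mul 2)).add
        tendsto_sqrtSum_dampedCosSubSin_nhdsGT_zero) ha
  linarith

lemma recipSum_exp_neg_sub_one_add (ha : 0 < a) :
    recipSum (1 / 2) (fun y ↦ Real.exp (-y) - 1 + y) a =
      4 / 3 * a * √(π * a) + realZeta (1 / 2) * a - realZeta (-(1 / 2)) +
        sqrtSum (-(3 / 2)) dampedPrimitive a := by
  have hid : Tendsto (fun a : ℝ ↦ a) (𝓝[>] 0) (𝓝 0) := nhdsWithin_le_nhds
  have hsqrt {a : ℝ} (ha : 0 < a) : a * √(π / a) = √(π * a) := by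
    rw [← Real.sqrt_sq ha.le, ← Real.sqrt_mul (by positivity), Real.sqrt_sq ha.le]
    congr 1
    field_simp
  have h := eq_of_hasDerivAt_zero_of_tendsto_nhdsGT_zero
    (f := fun a ↦ recipSum (1 / 2) (fun y ↦ Real.exp (-y) - 1 + y) a -
      4 / 3 * (a * √(π * a)) - realZeta (1 / 2) * a - sqrtSum (-(3 / 2)) dampedPrimitive a)
    (c := 0 - 4 / 3 * (0 * 0) - realZeta (1 / 2) * 0 - realZeta (-(1 / 2)))
    (fun a ha ↦ ((((hasDerivAt_recipSum_exp_neg_sub_one_add ha).sub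
      (((hasDerivAt_id a).mul (hasDerivAt_sqrt_pi_mul ha)).const_mul (4 / 3))).sub
        ((hasDerivAt_id a).const_mul _)).sub
          (hasDerivAt_sqrtSum_dampedPrimitive ha)).congr_deriv (by
            rw [recipSum_one_sub_exp_neg ha, id]
            linear_combination -(2 / 3) * hsqrt ha))
    ((((tendsto_recipSum_nhdsGT_zero abs_exp_neg_sub_one_add_le two_pos (by norm_num)).sub
      ((hid.mul tendsto_sqrt_pi_mul_nhdsGT_zero).const_mul (4 / 3))).sub
        (hid.const_mul _)).sub tendsto_sqrtSum_dampedPrimitive_nhdsGT_zero) ha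
  linarith

end ReciprocalSumFormulas

section DivisorSums

variable {r s : ℝ} {g : ℕ → ℝ}

lemma rsigma_div_rpow_mul (r : ℝ) (g : ℕ → ℝ) (n : ℕ) :
    rsigma r n / (n : ℝ) ^ r * g n =
      ∑ p ∈ n.divisorsAntidiagonal, (p.2 : ℝ) ^ (-r) * g (p.1 * p.2) := by
  rw [Nat.sum_divisorsAntidiagonal fun a b ↦ (b : ℝ) ^ (-r) * g (a * b), rsigma, sum_div, sum_mul]
  refine sum_congr rfl fun d hd ↦ ?_
  have hdvd := Nat.dvd_of_mem_divisors hd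
  have hd0 : (d : ℝ) ≠ 0 := Nat.cast_ne_zero.2 (Nat.pos_of_mem_divisors hd).ne'
  rw [Nat.mul_div_cancel' hdvd, Nat.cast_div hdvd hd0, Real.rpow_neg (by positivity),
    Real.div_rpow (by positivity) (by positivity), inv_div]

lemma hasSum_rsigma_of_hasSum_snd_rpow
    (h : HasSum (fun p : ℕ+ × ℕ+ ↦ (p.2 : ℝ) ^ (-r) * g (p.1 * p.2)) s) :
    HasSum (fun n : ℕ+ ↦ rsigma r n / (n : ℝ) ^ r * g n) s := by
  refine (sigmaAntidiagonalEquivProd.hasSum_iff.2 h).sigma fun n ↦ ?_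
  rw [rsigma_div_rpow_mul, ← sum_coe_sort]
  exact hasSum_fintype fun q : Nat.divisorsAntidiagonal n ↦ (q.1.2 : ℝ) ^ (-r) * g (q.1.1 * q.1.2)

lemma hasSum_rsigma_of_hasSum_fst_rpow
    (h : HasSum (fun p : ℕ+ × ℕ+ ↦ (p.1 : ℝ) ^ (-r) * g (p.1 * p.2)) s) :
    HasSum (fun n : ℕ+ ↦ rsigma r n / (n : ℝ) ^ r * g n) s := by
  refine hasSum_rsigma_of_hasSum_snd_rpow
    (((Equiv.prodComm ℕ+ ℕ+).hasSum_iff.2 h).congr_fun fun p ↦ ?_)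
  rw [mul_comm (p.1 : ℕ)]
  rfl

end DivisorSums

section PartialFractions

/-- The sum `∑ 1 / (x ^ 2 + (j * k) ^ 2)` over the positive integers `j`. -/
noncomputable def invQuadSum (x k : ℝ) : ℝ := ∑' j : ℕ+, 1 / (x ^ 2 + (j * k) ^ 2)

lemma ofReal_mul_I_mem_integerComplement {y : ℝ} (hy : y ≠ 0) :
    (y : ℂ) * I ∈ Complex.integerComplement := by
  rintro ⟨n, hn⟩
  exact hy (by simpa using (congrArg Complex.im hn).symm)

lemma one_div_sub_add_one_div_add_mul_I {y m : ℝ} (hy : y ≠ 0) :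
    1 / (y * I - m) + 1 / (y * I + m) = -2 * I * y * ((1 / (y ^ 2 + (m * 1) ^ 2) : ℝ) : ℂ) := by
  have hsub : (y : ℂ) * I - m ≠ 0 := fun h ↦ hy (by simpa using congrArg Complex.im h)
  have hadd : (y : ℂ) * I + m ≠ 0 := fun h ↦ hy (by simpa using congrArg Complex.im h)
  have hquad : (y : ℂ) ^ 2 + m ^ 2 ≠ 0 := by
    have : y ^ 2 + m ^ 2 ≠ 0 := by positivity
    exact_mod_cast this
  push_cast
  field_simp
  linear_combination (2 * (y : ℂ) ^ 3 * I) * Complex.I_sq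

lemma exp_neg_div_one_sub_exp_neg {y : ℝ} (hy : 0 < y) :
    Real.exp (-(2 * π * y)) / (1 - Real.exp (-(2 * π * y))) =
      1 / (2 * π * y) - 1 / 2 + y / π * invQuadSum y 1 := by
  have h := cot_series_rep (ofReal_mul_I_mem_integerComplement hy.ne')
  have hterm (n : ℕ+) : 1 / ((y : ℂ) * I - n) + 1 / (y * I + n) =
      -2 * I * y * ((1 / (y ^ 2 + (n * 1) ^ 2) : ℝ) : ℂ) := by
    exact_mod_cast one_div_sub_add_one_div_add_mul_I (m := n) hy.ne'
  have hexponent : 2 * I * (π * (y * I)) = ((-(2 * π * y) : ℝ) : ℂ) := by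
    push_cast
    linear_combination (2 * (π : ℂ) * y) * Complex.I_sq
  simp_rw [hterm] at h
  rw [tsum_mul_left, ← Complex.ofReal_tsum, ← invQuadSum, Complex.cot_eq_exp_ratio, hexponent,
    ← Complex.ofReal_exp] at h
  set E := Real.exp (-(2 * π * y))
  have hE : (1 - E : ℂ) ≠ 0 := by
    have : E < 1 := Real.exp_lt_one_iff.2 (neg_neg_of_pos (by positivity))
    exact_mod_cast (sub_pos.2 this).ne'
  have hyc : (y : ℂ) ≠ 0 := mod_cast hy.ne'
  have key : ((E / (1 - E) : ℝ) : ℂ) =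
      ((1 / (2 * π * y) - 1 / 2 + y / π * invQuadSum y 1 : ℝ) : ℂ) := by
    push_cast
    field_simp at h ⊢
    rw [Complex.I_sq] at h
    linear_combination h
  exact_mod_cast key

lemma invQuadSum_div {x k : ℝ} (hk : k ≠ 0) :
    invQuadSum (x / k) 1 = k ^ 2 * invQuadSum x k := by
  rw [invQuadSum, invQuadSum, ← tsum_mul_left]
  refine tsum_congr fun j ↦ ?_
  field_simp

lemma exp_neg_div_div_one_sub_exp_neg_div {x k : ℝ} (hx : 0 < x) (hk : 0 < k) :
    Real.exp (-(2 * π * x / k)) / (1 - Real.exp (-(2 * π * x / k))) =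
      k / (2 * π * x) - 1 / 2 + x / π * (k * invQuadSum x k) := by
  have h := exp_neg_div_one_sub_exp_neg (div_pos hx hk)
  rw [invQuadSum_div hk.ne', ← mul_div_assoc] at h
  rw [h]
  field_simp

end PartialFractions

section LatticeSums

/-- The double sum `∑ k ^ s / (x ^ 2 + (j * k) ^ 2)` over the positive integers `j` and `k`. -/
noncomputable def latticeSum (x s : ℝ) : ℝ := ∑' k : ℕ+, (k : ℝ) ^ s * invQuadSum x k

variable {x s : ℝ}

lemma summable_rpow_mul_one_div_quad (x : ℝ) (hs : s < 1) :
    Summable fun p : ℕ+ × ℕ+ ↦ (p.1 : ℝ) ^ s * (1 / (x ^ 2 + (p.2 * p.1) ^ 2)) := by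
  have hprod := (summable_pnat_rpow (r := s - 2) (by linarith)).mul_of_nonneg
    (summable_pnat_rpow (r := -2) (by norm_num)) (fun _ ↦ by positivity) fun _ ↦ by positivity
  refine Summable.of_nonneg_of_le (fun p ↦ by positivity) (fun p ↦ ?_) hprod
  calc (p.1 : ℝ) ^ s * (1 / (x ^ 2 + (p.2 * p.1) ^ 2))
      ≤ (p.1 : ℝ) ^ s * (1 / (p.2 * p.1) ^ 2) := by gcongr; linarith [sq_nonneg x]
    _ = (p.1 : ℝ) ^ (s - 2) * (p.2 : ℝ) ^ (-2 : ℝ) := by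
        rw [Real.rpow_sub (by positivity), Real.rpow_neg (by positivity), Real.rpow_two,
          Real.rpow_two]
        field_simp

lemma summable_rpow_mul_invQuadSum (x : ℝ) (hs : s < 1) :
    Summable fun k : ℕ+ ↦ (k : ℝ) ^ s * invQuadSum x k := by
  simpa only [invQuadSum, tsum_mul_left] using (summable_rpow_mul_one_div_quad x hs).prod

lemma hasSum_latticeSum (x : ℝ) (hs : s < 1) :
    HasSum (fun p : ℕ+ × ℕ+ ↦ (p.1 : ℝ) ^ s * (1 / (x ^ 2 + (p.2 * p.1) ^ 2)))
      (latticeSum x s) := by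
  have h := summable_rpow_mul_one_div_quad x hs
  simpa only [h.tsum_prod, latticeSum, invQuadSum, tsum_mul_left] using h.hasSum

lemma hasSum_rsigma_div_quad (x : ℝ) :
    HasSum (fun n : ℕ+ ↦ rsigma (1 / 2) n / (n : ℝ) ^ (1 / 2 : ℝ) *
        ((√x - √(2 * n)) / (x ^ 2 + n ^ 2)))
      (√x * latticeSum x (-(1 / 2)) - √2 * latticeSum x (1 / 2)) := by
  have hone := hasSum_rsigma_of_hasSum_fst_rpow (r := 1 / 2)
    (g := fun n ↦ 1 / (x ^ 2 + n ^ 2)) (s := latticeSum x (-(1 / 2))) ?_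
  · have hsqrt := hasSum_rsigma_of_hasSum_snd_rpow (r := 1 / 2)
      (g := fun n ↦ √n / (x ^ 2 + n ^ 2)) (s := latticeSum x (1 / 2)) ?_
    · refine ((hone.mul_left √x).sub (hsqrt.mul_left √2)).congr_fun fun n ↦ ?_
      rw [Real.sqrt_mul zero_le_two]
      ring
    · refine (hasSum_latticeSum x (by norm_num)).congr_fun fun p ↦ ?_
      push_cast
      rw [Real.sqrt_mul (by positivity), Real.rpow_neg (by positivity), ← Real.sqrt_eq_rpow,
        ← Real.sqrt_eq_rpow]
      field_simp
  · refine (hasSum_latticeSum x (by norm_num)).congr_fun fun p ↦ ?_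
    push_cast
    rw [mul_comm (p.1 : ℝ)]

end LatticeSums

section DivisorTransform

variable {α β K b : ℝ} {g : ℝ → ℝ}

lemma summable_rpow_mul_rpow_mul_comp_sqrt
    (hg : ∀ u, 0 ≤ u → |g u| ≤ K * Real.exp (-(u / 2))) (hb : 0 < b) :
    Summable fun p : ℕ+ × ℕ+ ↦
      (p.1 : ℝ) ^ α * ((p.2 : ℝ) ^ β * g (2 * √(π * (b * p.1) * p.2))) := by
  have hK : 0 ≤ K := by simpa using (abs_nonneg _).trans (hg 0 le_rfl)
  set c : ℝ := √(π * b) / 2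
  have hc : 0 < c := by positivity
  have hprod := (((summable_pnat_rpow_mul_exp_neg_mul_sqrt α hc).mul_of_nonneg
    (summable_pnat_rpow_mul_exp_neg_mul_sqrt β hc) (fun _ ↦ by positivity)
    fun _ ↦ by positivity).mul_left K)
  refine hprod.of_norm_bounded fun p ↦ ?_
  have hsqrt (n : ℕ+) : 1 ≤ √(n : ℝ) := Real.one_le_sqrt.2 (Nat.one_le_cast.2 n.pos)
  have hexponent : c * √p.1 + c * √p.2 ≤ √(π * (b * p.1)) * √p.2 := by
    rw [← mul_assoc π, Real.sqrt_mul (by positivity), show √(π * b) = 2 * c by ring]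
    nlinarith [hsqrt p.1, hsqrt p.2,
      mul_nonneg (sub_nonneg.2 (hsqrt p.1)) (sub_nonneg.2 (hsqrt p.2))]
  rw [norm_mul, Real.norm_of_nonneg (by positivity)]
  calc (p.1 : ℝ) ^ α * ‖(p.2 : ℝ) ^ β * g (2 * √(π * (b * p.1) * p.2))‖
      ≤ (p.1 : ℝ) ^ α *
          (K * ((p.2 : ℝ) ^ β * Real.exp (-(√(π * (b * p.1)) * √p.2)))) := by
        gcongr
        exact norm_rpow_mul_comp_sqrt_le hg (by positivity) le_rfl p.2
    _ ≤ (p.1 : ℝ) ^ α * (K * ((p.2 : ℝ) ^ β * Real.exp (-(c * √p.1 + c * √p.2)))) := by gcongr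
    _ = K * ((p.1 : ℝ) ^ α * Real.exp (-(c * √p.1)) *
          ((p.2 : ℝ) ^ β * Real.exp (-(c * √p.2)))) := by
        rw [neg_add, Real.exp_add]
        ring

lemma summable_rpow_mul_sqrtSum (hg : ∀ u, 0 ≤ u → |g u| ≤ K * Real.exp (-(u / 2)))
    (hb : 0 < b) : Summable fun j : ℕ+ ↦ (j : ℝ) ^ α * sqrtSum β g (b * j) := by
  simpa only [sqrtSum, tsum_mul_left] using
    (summable_rpow_mul_rpow_mul_comp_sqrt (α := α) (β := β) hg hb).prod

lemma hasSum_rpow_mul_rpow_mul_comp_sqrt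
    (hg : ∀ u, 0 ≤ u → |g u| ≤ K * Real.exp (-(u / 2))) (hb : 0 < b) :
    HasSum (fun p : ℕ+ × ℕ+ ↦
        (p.1 : ℝ) ^ α * ((p.2 : ℝ) ^ β * g (2 * √(π * (b * p.1) * p.2))))
      (∑' j : ℕ+, (j : ℝ) ^ α * sqrtSum β g (b * j)) := by
  have h := summable_rpow_mul_rpow_mul_comp_sqrt (α := α) (β := β) hg hb
  simpa only [h.tsum_prod, sqrtSum, tsum_mul_left] using h.hasSum

lemma hasSum_rsigma_comp_sqrt_snd
    (hg : ∀ u, 0 ≤ u → |g u| ≤ K * Real.exp (-(u / 2))) (hb : 0 < b) (r : ℝ) :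
    HasSum (fun n : ℕ+ ↦ rsigma r n / (n : ℝ) ^ r * g (2 * √(π * b * n)))
      (∑' j : ℕ+, sqrtSum (-r) g (b * j)) := by
  refine hasSum_rsigma_of_hasSum_snd_rpow (g := fun n ↦ g (2 * √(π * b * n))) ?_
  have h := hasSum_rpow_mul_rpow_mul_comp_sqrt (α := 0) (β := -r) hg hb
  simp only [Real.rpow_zero, one_mul] at h
  refine h.congr_fun fun p ↦ ?_
  push_cast
  ring_nf

lemma hasSum_rsigma_comp_sqrt_fst
    (hg : ∀ u, 0 ≤ u → |g u| ≤ K * Real.exp (-(u / 2))) (hb : 0 < b) (r : ℝ) :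
    HasSum (fun n : ℕ+ ↦ rsigma r n / (n : ℝ) ^ r * g (2 * √(π * b * n)))
      (∑' j : ℕ+, (j : ℝ) ^ (-r) * sqrtSum 0 g (b * j)) := by
  refine hasSum_rsigma_of_hasSum_fst_rpow (g := fun n ↦ g (2 * √(π * b * n))) ?_
  have h := hasSum_rpow_mul_rpow_mul_comp_sqrt (α := -r) (β := 0) hg hb
  simp only [Real.rpow_zero, one_mul] at h
  refine h.congr_fun fun p ↦ ?_
  push_cast
  ring_nf

lemma hasSum_sqrtSum_sub (hb : 0 < b) :
    HasSum (fun j : ℕ+ ↦ (j : ℝ) ^ (-(1 / 2) : ℝ) * sqrtSum 0 dampedCos (b * j) -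
        sqrtSum (-(1 / 2)) dampedCosSubSin (b * j))
      (∑' n : ℕ+, rsigma (1 / 2) n / (n : ℝ) ^ (1 / 2 : ℝ) * dampedSin (2 * √(π * b * n))) := by
  have hcos := hasSum_rsigma_comp_sqrt_fst abs_dampedCos_le hb (1 / 2)
  have hsub := hasSum_rsigma_comp_sqrt_snd abs_dampedCosSubSin_le hb (1 / 2)
  have hsum := (hcos.sub hsub).congr_fun (g := fun n : ℕ+ ↦
    rsigma (1 / 2) n / (n : ℝ) ^ (1 / 2 : ℝ) * dampedSin (2 * √(π * b * n))) fun n ↦ by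
      rw [dampedCosSubSin]
      ring
  rw [hsum.tsum_eq]
  refine (summable_rpow_mul_sqrtSum abs_dampedCos_le hb).hasSum.sub (Summable.hasSum ?_)
  simpa using summable_rpow_mul_sqrtSum (α := 0) (β := -(1 / 2)) abs_dampedCosSubSin_le hb

end DivisorTransform

section PartialSums

/-- The sum `∑ w k * (1 - exp (-a / k))` over the positive integers, which tends to `∑ w k` as `a`
tends to infinity. -/
noncomputable def expCutoffSum (w : ℕ+ → ℝ) (a : ℝ) : ℝ :=
  ∑' k : ℕ+, w k * (1 - Real.exp (-(a / k)))

variable {w : ℕ+ → ℝ} {a x : ℝ}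

lemma norm_mul_one_sub_exp_neg_le (w : ℕ+ → ℝ) (ha : 0 ≤ a) (k : ℕ+) :
    ‖w k * (1 - Real.exp (-(a / k)))‖ ≤ ‖w k‖ := by
  have hexp : Real.exp (-(a / k)) ≤ 1 := Real.exp_le_one_iff.2 (neg_nonpos.2 (by positivity))
  rw [norm_mul, Real.norm_of_nonneg (sub_nonneg.2 hexp)]
  exact mul_le_of_le_one_right (norm_nonneg _) (by linarith [Real.exp_pos (-(a / k))])

lemma summable_mul_one_sub_exp_neg (hw : Summable w) (ha : 0 ≤ a) :
    Summable fun k : ℕ+ ↦ w k * (1 - Real.exp (-(a / k))) :=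
  hw.norm.of_norm_bounded (norm_mul_one_sub_exp_neg_le w ha)

lemma tendsto_expCutoffSum (hw : Summable w) :
    Tendsto (expCutoffSum w) atTop (𝓝 (∑' k, w k)) := by
  refine tendsto_tsum_of_dominated_convergence hw.norm (fun k ↦ ?_)
    (eventually_atTop.2 ⟨0, fun a ha k ↦ norm_mul_one_sub_exp_neg_le w ha k⟩)
  have hexp : Tendsto (fun a : ℝ ↦ Real.exp (-(a / k))) atTop (𝓝 0) :=
    Real.tendsto_exp_neg_atTop_nhds_zero.comp (tendsto_id.atTop_div_const (by positivity))
  simpa using (hexp.const_sub 1).const_mul (w k)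

lemma sum_range_exp_neg {y : ℝ} (hy : 0 < y) (N : ℕ) :
    ∑ j ∈ range N, Real.exp (-(y * (j + 1))) =
      Real.exp (-y) / (1 - Real.exp (-y)) * (1 - Real.exp (-(y * N))) := by
  have hne : 1 - Real.exp (-y) ≠ 0 := (sub_pos.2 (Real.exp_lt_one_iff.2 (by linarith))).ne'
  have hgeom := geom_sum_mul_neg (Real.exp (-y)) N
  have hpow (n : ℕ) : Real.exp (-y) ^ n = Real.exp (-(y * n)) := by
    rw [← Real.exp_nat_mul]
    ring_nf
  have hterm (j : ℕ) : Real.exp (-(y * (j + 1))) = Real.exp (-y) * Real.exp (-y) ^ j := by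
    rw [hpow, ← Real.exp_add]
    ring_nf
  rw [sum_congr rfl fun j _ ↦ hterm j, ← mul_sum, ← hpow, ← hgeom]
  field_simp

lemma sum_range_exp_neg_div {k : ℝ} (hx : 0 < x) (hk : 0 < k) (N : ℕ) :
    ∑ j ∈ range N, Real.exp (-(2 * π * x * (j + 1) / k)) =
      (k / (2 * π * x) - 1 / 2 + x / π * (k * invQuadSum x k)) *
        (1 - Real.exp (-(2 * π * x * N / k))) := by
  have h := sum_range_exp_neg (y := 2 * π * x / k) (by positivity) N
  rw [exp_neg_div_div_one_sub_exp_neg_div hx hk] at h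
  simpa only [div_mul_eq_mul_div] using h

lemma sum_range_recipSum_exp_neg (hx : 0 < x) (N : ℕ) :
    ∑ j ∈ range N, recipSum (-(3 / 2)) (fun y ↦ Real.exp (-y)) (2 * π * x * (j + 1)) =
      recipSum (-(1 / 2)) (fun y ↦ 1 - Real.exp (-y)) (2 * π * x * N) / (2 * π * x) -
        expCutoffSum (fun k ↦ (k : ℝ) ^ (-(3 / 2) : ℝ)) (2 * π * x * N) / 2 +
        x / π * expCutoffSum (fun k ↦ (k : ℝ) ^ (-(1 / 2) : ℝ) * invQuadSum x k)
          (2 * π * x * N) := by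
  have hN : 0 ≤ 2 * π * x * N := by positivity
  have hrecip := summable_rpow_mul_comp_div (r := -(1 / 2)) abs_one_sub_exp_neg_le (by norm_num) hN
  have hzeta := summable_mul_one_sub_exp_neg
    (summable_pnat_rpow (r := -(3 / 2)) (by norm_num)) hN
  have hquad := summable_mul_one_sub_exp_neg
    (summable_rpow_mul_invQuadSum x (s := -(1 / 2)) (by norm_num)) hN
  have hleft := hasSum_sum fun (j : ℕ) (_ : j ∈ range N) ↦ (summable_rpow_mul_comp_div
    (r := -(3 / 2)) (p := 0) (a := 2 * π * x * (j + 1)) (φ := fun y ↦ Real.exp (-y))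
    (fun y hy ↦ by simpa using hy) (by norm_num) (by positivity)).hasSum
  refine hleft.unique ((((hrecip.hasSum.div_const _).sub (hzeta.hasSum.div_const _)).add
    (hquad.hasSum.mul_left _)).congr_fun fun k ↦ ?_)
  have hk : (0 : ℝ) < k := by positivity
  have hrpow : (k : ℝ) ^ (-(1 / 2) : ℝ) = (k : ℝ) ^ (-(3 / 2) : ℝ) * k := by
    rw [← Real.rpow_add_one hk.ne']
    norm_num
  rw [← mul_sum, sum_range_exp_neg_div hx hk, hrpow]
  ring

lemma sum_range_recipSum_one_sub_exp_neg (hx : 0 < x) (N : ℕ) :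
    ∑ j ∈ range N, recipSum (-(1 / 2)) (fun y ↦ 1 - Real.exp (-y)) (2 * π * x * (j + 1)) =
      recipSum (1 / 2) (fun y ↦ Real.exp (-y) - 1 + y) (2 * π * x * N) / (2 * π * x) +
        recipSum (-(1 / 2)) (fun y ↦ 1 - Real.exp (-y)) (2 * π * x * N) / 2 -
        x / π * expCutoffSum (fun k ↦ (k : ℝ) ^ (1 / 2 : ℝ) * invQuadSum x k)
          (2 * π * x * N) := by
  have hN : 0 ≤ 2 * π * x * N := by positivity
  have hlin := summable_rpow_mul_comp_div (r := 1 / 2) abs_exp_neg_sub_one_add_le (by norm_num) hN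
  have hrecip := summable_rpow_mul_comp_div (r := -(1 / 2)) abs_one_sub_exp_neg_le (by norm_num) hN
  have hquad := summable_mul_one_sub_exp_neg
    (summable_rpow_mul_invQuadSum x (s := 1 / 2) (by norm_num)) hN
  have hleft := hasSum_sum fun (j : ℕ) (_ : j ∈ range N) ↦ (summable_rpow_mul_comp_div
    (r := -(1 / 2)) (a := 2 * π * x * (j + 1)) abs_one_sub_exp_neg_le (by norm_num)
    (by positivity)).hasSum
  refine hleft.unique ((((hlin.hasSum.div_const _).add (hrecip.hasSum.div_const _)).sub
    (hquad.hasSum.mul_left _)).congr_fun fun k ↦ ?_)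
  have hk : (0 : ℝ) < k := by positivity
  have hrpow : (k : ℝ) ^ (1 / 2 : ℝ) = (k : ℝ) ^ (-(1 / 2) : ℝ) * k := by
    rw [← Real.rpow_add_one hk.ne']
    norm_num
  rw [← mul_sum, sum_sub_distrib, sum_range_exp_neg_div hx hk, hrpow, sum_const, card_range,
    nsmul_eq_mul]
  field_simp
  ring

lemma tendsto_sum_sqrt_sub :
    Tendsto (fun N : ℕ ↦ ∑ n ∈ range N, √(n + 1) - 2 / 3 * (N * √N) - √N / 2) atTop
      (𝓝 (realZeta (-(1 / 2)))) := by
  rw [← tendsto_add_atTop_iff_nat 1]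
  refine (tendsto_sum_rpow_sub (σ := -(1 / 2)) (by norm_num) (by norm_num)).congr fun N ↦ ?_
  have hpow : (N + 1 : ℝ) ^ (1 - -(1 / 2) : ℝ) = (N + 1) * √(N + 1) := by
    rw [sub_neg_eq_add, Real.rpow_add (by positivity), Real.rpow_one, ← Real.sqrt_eq_rpow]
  rw [hpow]
  simp only [neg_neg, ← Real.sqrt_eq_rpow]
  push_cast
  ring

end PartialSums

section TransformedSeries

variable {x : ℝ}

lemma sqrt_pi_mul_two_pi_mul (hx : 0 < x) (y : ℝ) :
    √(π * (2 * π * x * y)) = π * √(2 * x) * √y := by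
  rw [show π * (2 * π * x * y) = π ^ 2 * (2 * x) * y by ring, Real.sqrt_mul (by positivity),
    Real.sqrt_mul (by positivity), Real.sqrt_sq Real.pi_pos.le]

lemma rpow_mul_sqrtSum_sub_sqrtSum (hx : 0 < x) {y : ℝ} (hy : 0 < y) :
    y ^ (-(1 / 2) : ℝ) * sqrtSum 0 dampedCos (2 * π * x * y) -
        sqrtSum (-(1 / 2)) dampedCosSubSin (2 * π * x * y) =
      √(2 * x) / 2 * recipSum (-(3 / 2)) (fun y ↦ Real.exp (-y)) (2 * π * x * y) -
        y ^ (-(1 / 2) : ℝ) / 2 +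
        recipSum (-(1 / 2)) (fun y ↦ 1 - Real.exp (-y)) (2 * π * x * y) -
        2 * π * √(2 * x) * √y - realZeta (1 / 2) := by
  have ha : 0 < 2 * π * x * y := by positivity
  have hsqrt : √(2 * x) * √(π / (2 * π * x * y)) = y ^ (-(1 / 2) : ℝ) := by
    rw [Real.rpow_neg hy.le, ← Real.sqrt_eq_rpow, ← Real.sqrt_mul (by positivity),
      ← Real.sqrt_inv]
    congr 1
    field_simp
  rw [recipSum_exp_neg ha, recipSum_one_sub_exp_neg ha, sqrt_pi_mul_two_pi_mul hx, ← hsqrt]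
  ring

/-- Everything that grows with `N` has cancelled: each of the remaining terms has a limit. -/
lemma sum_range_sqrtSum_sub (hx : 0 < x) {N : ℕ} (hN : 0 < N) :
    ∑ j ∈ range N, ((j + 1 : ℝ) ^ (-(1 / 2) : ℝ) * sqrtSum 0 dampedCos (2 * π * x * (j + 1)) -
        sqrtSum (-(1 / 2)) dampedCosSubSin (2 * π * x * (j + 1))) =
      realZeta (1 / 2) / (2 * π * √(2 * x)) + realZeta (1 / 2) / 2 -
        realZeta (-(1 / 2)) / (2 * π * x) -
        (1 / (2 * π * √(2 * x)) + 1 / 2) *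
          sqrtSum (-(1 / 2)) dampedCosSubSin (2 * π * x * N) +
        1 / (2 * π * x) * sqrtSum (-(3 / 2)) dampedPrimitive (2 * π * x * N) -
        1 / 2 * (∑ n ∈ range N, (n + 1 : ℝ) ^ (-(1 / 2) : ℝ) - 2 * √N) -
        2 * π * √(2 * x) * (∑ n ∈ range N, √(n + 1) - 2 / 3 * (N * √N) - √N / 2) -
        √(2 * x) / 4 * expCutoffSum (fun k ↦ (k : ℝ) ^ (-(3 / 2) : ℝ)) (2 * π * x * N) +
        √(2 * x) * x / (2 * π) *
          expCutoffSum (fun k ↦ (k : ℝ) ^ (-(1 / 2) : ℝ) * invQuadSum x k) (2 * π * x * N) -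
        x / π *
          expCutoffSum (fun k ↦ (k : ℝ) ^ (1 / 2 : ℝ) * invQuadSum x k) (2 * π * x * N) := by
  have ha : 0 < 2 * π * x * N := by positivity
  have hinv : 1 / (2 * π * √(2 * x)) = √(2 * x) / (4 * π * x) := by
    rw [div_eq_div_iff (by positivity) (by positivity)]
    linear_combination -(2 * π) * Real.mul_self_sqrt (by positivity : 0 ≤ 2 * x)
  rw [sum_congr rfl fun (j : ℕ) _ ↦ rpow_mul_sqrtSum_sub_sqrtSum hx (y := j + 1) (by positivity)]
  simp only [sum_sub_distrib, sum_add_distrib, ← mul_sum, ← sum_div, sum_const, card_range,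
    nsmul_eq_mul]
  rw [sum_range_recipSum_exp_neg hx, sum_range_recipSum_one_sub_exp_neg hx,
    recipSum_one_sub_exp_neg ha, recipSum_exp_neg_sub_one_add ha, sqrt_pi_mul_two_pi_mul hx,
    div_eq_mul_one_div (realZeta (1 / 2)) (2 * π * √(2 * x)), hinv]
  field_simp
  ring_nf
  rw [Real.sq_sqrt (by positivity)]
  ring

lemma tendsto_sum_range_sqrtSum_sub (hx : 0 < x) :
    Tendsto (fun N : ℕ ↦ ∑ j ∈ range N, ((j + 1 : ℝ) ^ (-(1 / 2) : ℝ) *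
        sqrtSum 0 dampedCos (2 * π * x * (j + 1)) -
        sqrtSum (-(1 / 2)) dampedCosSubSin (2 * π * x * (j + 1)))) atTop
      (𝓝 (realZeta (1 / 2) / (2 * π * √(2 * x)) -
        (1 / (2 * π * x) + π * √(2 * x)) * realZeta (-(1 / 2)) +
        √(2 * x) * x / (2 * π) * latticeSum x (-(1 / 2)) - x / π * latticeSum x (1 / 2))) := by
  have ha : Tendsto (fun N : ℕ ↦ 2 * π * x * N) atTop atTop :=
    tendsto_natCast_atTop_atTop.const_mul_atTop (by positivity)
  have hzeta := (tendsto_expCutoffSum (summable_pnat_rpow (r := -(3 / 2)) (by norm_num))).comp ha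
  have hquad_neg := (tendsto_expCutoffSum
    (summable_rpow_mul_invQuadSum x (s := -(1 / 2)) (by norm_num))).comp ha
  have hquad := (tendsto_expCutoffSum
    (summable_rpow_mul_invQuadSum x (s := 1 / 2) (by norm_num))).comp ha
  have hsub := (tendsto_sqrtSum_atTop (r := -(1 / 2)) abs_dampedCosSubSin_le).comp ha
  have hprim := (tendsto_sqrtSum_atTop (r := -(3 / 2)) abs_dampedPrimitive_le).comp ha
  have hlim := ((((((((tendsto_const_nhds (x := realZeta (1 / 2) / (2 * π * √(2 * x)) +
    realZeta (1 / 2) / 2 - realZeta (-(1 / 2)) / (2 * π * x))).sub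
    (hsub.const_mul (1 / (2 * π * √(2 * x)) + 1 / 2))).add
    (hprim.const_mul (1 / (2 * π * x)))).sub
    (tendsto_sum_rpow_neg_half_sub.const_mul (1 / 2))).sub
    (tendsto_sum_sqrt_sub.const_mul (2 * π * √(2 * x)))).sub
    (hzeta.const_mul (√(2 * x) / 4))).add
    (hquad_neg.const_mul (√(2 * x) * x / (2 * π)))).sub
    (hquad.const_mul (x / π)))
  refine (hlim.congr' ?_).trans (le_of_eq (congrArg 𝓝 ?_))
  · filter_upwards [eventually_gt_atTop 0] with N hN
    exact (sum_range_sqrtSum_sub hx hN).symm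
  · have hzeta_value : ∑' k : ℕ+, (k : ℝ) ^ (-(3 / 2) : ℝ) = -(4 * π) * realZeta (-(1 / 2)) := by
      rw [tsum_pnat_rpow (by norm_num), realZeta_neg_half]
      field_simp
    rw [hzeta_value, ← latticeSum, ← latticeSum]
    ring

lemma tsum_rsigma_mul_dampedSin (hx : 0 < x) :
    ∑' n : ℕ+, rsigma (1 / 2) n / (n : ℝ) ^ (1 / 2 : ℝ) *
        dampedSin (2 * √(π * (2 * π * x) * n)) =
      realZeta (1 / 2) / (2 * π * √(2 * x)) -
        (1 / (2 * π * x) + π * √(2 * x)) * realZeta (-(1 / 2)) +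
        x / (π * √2) * ∑' n : ℕ+, rsigma (1 / 2) n / (n : ℝ) ^ (1 / 2 : ℝ) *
          ((√x - √(2 * n)) / (x ^ 2 + n ^ 2)) := by
  have hpartial := (hasSum_pnat_iff_hasSum_succ (f := fun j : ℕ ↦
    (j : ℝ) ^ (-(1 / 2) : ℝ) * sqrtSum 0 dampedCos (2 * π * x * j) -
      sqrtSum (-(1 / 2)) dampedCosSubSin (2 * π * x * j))).1
        (hasSum_sqrtSum_sub (b := 2 * π * x) (by positivity))
  push_cast at hpartial
  rw [tendsto_nhds_unique hpartial.tendsto_sum_nat (tendsto_sum_range_sqrtSum_sub hx),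
    (hasSum_rsigma_div_quad x).tsum_eq, Real.sqrt_mul zero_le_two]
  have htwo : √2 ^ 2 = (2 : ℝ) := Real.sq_sqrt zero_le_two
  field_simp
  linear_combination (x ^ 2 * √x ^ 2 * latticeSum x (-(1 / 2))) * htwo

end TransformedSeries

theorem corollary_half_sin_general (x : ℝ) (hx : 0 < x) :
    (∑' n : ℕ, ((rsigma (1 / 2) (n + 1) / Real.sqrt ((n : ℝ) + 1) *
        Real.exp (-(2 * π * Real.sqrt (2 * ((n : ℝ) + 1) * x))) *
        Real.sin (2 * π * Real.sqrt (2 * ((n : ℝ) + 1) * x)) : ℝ) : ℂ))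
    = riemannZeta (1 / 2) / ((2 * π * Real.sqrt (2 * x) : ℝ) : ℂ)
      - ((1 / (2 * π * x) + π * Real.sqrt (2 * x) : ℝ) : ℂ) * riemannZeta (-1 / 2)
      + ((x / (π * Real.sqrt 2) : ℝ) : ℂ) *
        ∑' n : ℕ, ((rsigma (1 / 2) (n + 1) / Real.sqrt ((n : ℝ) + 1) *
          ((Real.sqrt x - Real.sqrt (2 * ((n : ℝ) + 1))) /
            (x ^ 2 + ((n : ℝ) + 1) ^ 2)) : ℝ) : ℂ) := by
  have hfreq (n : ℕ) : 2 * √(π * (2 * π * x) * (n + 1)) = 2 * π * √(2 * (n + 1) * x) := by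
    rw [show π * (2 * π * x) * (n + 1) = π ^ 2 * (2 * (n + 1) * x) by ring,
      Real.sqrt_mul (by positivity), Real.sqrt_sq Real.pi_pos.le]
    ring
  have h := tsum_rsigma_mul_dampedSin hx
  rw [tsum_pnat_eq_tsum_succ (f := fun n : ℕ ↦ rsigma (1 / 2) n / (n : ℝ) ^ (1 / 2 : ℝ) *
      dampedSin (2 * √(π * (2 * π * x) * n))),
    tsum_pnat_eq_tsum_succ (f := fun n : ℕ ↦ rsigma (1 / 2) n / (n : ℝ) ^ (1 / 2 : ℝ) *
      ((√x - √(2 * n)) / (x ^ 2 + n ^ 2)))] at h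
  simp only [Nat.cast_add, Nat.cast_one, hfreq, dampedSin, ← Real.sqrt_eq_rpow] at h
  simp only [← mul_assoc (_ / _) (Real.exp _)] at h
  have hhalf := ofReal_realZeta (1 / 2)
  have hneg_half := ofReal_realZeta (-(1 / 2))
  push_cast at hhalf hneg_half
  rw [neg_div, ← hhalf, ← hneg_half]
  exact_mod_cast congrArg ((↑) : ℝ → ℂ) h

theorem corollary_half_sin (x : ℝ) (hx : 0 < x) (hxint : ∀ k : ℤ, x ≠ (k : ℝ)) :
    (∑' n : ℕ, ((rsigma (1 / 2) (n + 1) / Real.sqrt ((n : ℝ) + 1) *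
        Real.exp (-(2 * π * Real.sqrt (2 * ((n : ℝ) + 1) * x))) *
        Real.sin (2 * π * Real.sqrt (2 * ((n : ℝ) + 1) * x)) : ℝ) : ℂ))
    = riemannZeta (1 / 2) / ((2 * π * Real.sqrt (2 * x) : ℝ) : ℂ)
      - ((1 / (2 * π * x) + π * Real.sqrt (2 * x) : ℝ) : ℂ) * riemannZeta (-1 / 2)
      + ((x / (π * Real.sqrt 2) : ℝ) : ℂ) *
        ∑' n : ℕ, ((rsigma (1 / 2) (n + 1) / Real.sqrt ((n : ℝ) + 1) *
          ((Real.sqrt x - Real.sqrt (2 * ((n : ℝ) + 1))) /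
            (x ^ 2 + ((n : ℝ) + 1) ^ 2)) : ℝ) : ℂ) :=
  corollary_half_sin_general x hx
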